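/- arXiv:2505.16179 — 4 statements merged into one kernel-verified Lean document; each statement's English description precedes it below -/
import Mathlib

section
/- Let Ψ be either the class of all forests or the class of all bipartite graphs, let α, β be reals with 2 < α ≤ 3 and 4α − β = 6, and let G be a minimal counterexample for Ψ, α, β. Then G has no vertex cut M such that the induced subgraph G[M] is isomorphic to the 4-cycle C4. -/
/-!
For bipartite graphs there is nothing to do, as `C₄` is bipartite. For forests, let `M` be a cut
inducing the 4-cycle `a b c d` and separating `L` from `R`, and put `G_L = G[M ∪ L]`,
`G_R = G[M ∪ R]`. Counting vertices and edges gives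
`q(G_L) + q(G_R) = q(G) + q(C₄) > q(C₄) = 2`; say `q(G_L) ≤ q(G_R)`.

A forest cut of `G_L` or `G_R`, or of such a graph with extra edges inside `M`, must have vertices
of `M` on both of its sides, as otherwise it extends to a forest cut of `G` (`exists_split`).

* If `q(G_L) ≤ 0`, then `q(G_R) > 2`, so `G_R` with both diagonals of `M` added has positive
  quality, hence has a forest cut by minimality. But `M` is now a clique and cannot be split
  (`false_of_both_chords`).
* If `q(G_L) > 0`, then `G_L` has a forest cut, which must separate two opposite vertices of the
  cycle, say `b` and `d`, and so contains `a` and `c`. Since `q(G_R) > 1`, the graph `G_R + ac` has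
  a forest cut too. It contains `a` and `c` and separates `b` from `d`, because no other pair of
  vertices of `M` is nonadjacent. The two cuts agree on `M`, so their union separates `b` from `d`
  in `G`. It is a forest: the one in `G_R + ac` contains the edge `ac`, so after deleting this edge
  `a` and `c` are in different components, and gluing along `{a, c}` creates no cycle
  (`glue_isAcyclic`).
-/

open SimpleGraph

/-- `M` is a vertex cut of `G`: the complement of `M` can be partitioned into two nonempty
sets `L`, `R` with no edge of `G` joining a vertex of `L` to a vertex of `R`. -/
def IsVertexCut {V : Type*} (G : SimpleGraph V) (M : Set V) : Prop :=
  ∃ L R : Set V, L.Nonempty ∧ R.Nonempty ∧ Disjoint L R ∧ L ∪ R = Mᶜ ∧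
    ∀ x ∈ L, ∀ y ∈ R, ¬ G.Adj x y

/-- `(M, L, R)` is a separation of `G`. -/
def IsSeparation {V : Type*} (G : SimpleGraph V) (M L R : Set V) : Prop :=
  L.Nonempty ∧ R.Nonempty ∧ M ∪ L ∪ R = Set.univ ∧
  Disjoint M L ∧ Disjoint M R ∧ Disjoint L R ∧
  ∀ x ∈ L, ∀ y ∈ R, ¬ G.Adj x y

/-- The quality function `q_{α,β}(G) = α|V(G)| − |E(G)| − β`. -/
noncomputable def quality {V : Type*} (α β : ℝ) (G : SimpleGraph V) : ℝ :=
  α * Nat.card V - Nat.card G.edgeSet - β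

/-- degree of a vertex as the cardinality of its neighbor set. -/
noncomputable def vdeg {V : Type*} (G : SimpleGraph V) (v : V) : ℕ :=
  (G.neighborSet v).ncard

/-- The class of forests. -/
def ForestClass : ∀ (W : Type), SimpleGraph W → Prop := fun _ H => H.IsAcyclic

/-- The class of bipartite graphs. -/
def BipartiteClass : ∀ (W : Type), SimpleGraph W → Prop := fun _ H => H.Colorable 2

/-- `G` has a `Ψ`-cut: a vertex cut whose induced subgraph lies in `Ψ`. -/
def HasPsiCut (Ψ : ∀ (W : Type), SimpleGraph W → Prop) {V : Type} (G : SimpleGraph V) : Prop :=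
  ∃ M : Set V, IsVertexCut G M ∧ Ψ ↥M (G.induce M)

/-- `G` has a forest cut. -/
def HasForestCut {V : Type*} (G : SimpleGraph V) : Prop :=
  ∃ M : Set V, IsVertexCut G M ∧ (G.induce M).IsAcyclic

/-- `G` has a bipartite cut. -/
def HasBipartiteCut {V : Type*} (G : SimpleGraph V) : Prop :=
  ∃ M : Set V, IsVertexCut G M ∧ (G.induce M).Colorable 2

/-- `G` has an independent cut. -/
def HasIndependentCut {V : Type*} (G : SimpleGraph V) : Prop :=
  ∃ M : Set V, IsVertexCut G M ∧ ∀ x ∈ M, ∀ y ∈ M, ¬ G.Adj x y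

/-- `G` is a minimal counterexample for the class `Ψ` and parameters `α`, `β`. -/
def MinCounterexample (Ψ : ∀ (W : Type), SimpleGraph W → Prop) (α β : ℝ)
    {V : Type} (G : SimpleGraph V) : Prop :=
  4 ≤ Nat.card V ∧ 0 < quality α β G ∧ ¬ HasPsiCut Ψ G ∧
  ∀ (W : Type) (H : SimpleGraph W),
    4 ≤ Nat.card W → Nat.card W < Nat.card V → 0 < quality α β H → HasPsiCut Ψ H

/-- `T0`: a triangle together with an isolated vertex. -/
def graphT0 : SimpleGraph (Fin 4) := SimpleGraph.fromEdgeSet {s(0,1), s(0,2), s(1,2)}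

/-- `T1`: a triangle with an extra vertex joined to exactly one triangle vertex. -/
def graphT1 : SimpleGraph (Fin 4) := SimpleGraph.fromEdgeSet {s(0,1), s(0,2), s(1,2), s(2,3)}

/-- The diamond graph `K4` minus one edge. -/
def diamondGraph : SimpleGraph (Fin 4) := (⊤ : SimpleGraph (Fin 4)).deleteEdges {s(0,1)}

/-- Number of edges of `G` with one endpoint in `X` and the other outside `X`. -/
noncomputable def crossEdges {V : Type*} (G : SimpleGraph V) (X : Set V) : ℕ :=
  {e : Sym2 V | e ∈ G.edgeSet ∧ ∃ x ∈ X, ∃ y ∉ X, e = s(x,y)}.ncard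

/-! ### Forests and induced subgraphs -/

/-- The set `F` induces a forest exactly when no edge `uv` inside `F` can be bypassed by a walk
inside `F`. This avoids subtypes, which makes forests on different vertex sets comparable. -/
lemma induce_isAcyclic_iff {V : Type*} (H : SimpleGraph V) (F : Set V) :
    (H.induce F).IsAcyclic ↔ ∀ u ∈ F, ∀ v ∈ F, H.Adj u v →
      ¬ Relation.ReflTransGen
        (fun x y => x ∈ F ∧ y ∈ F ∧ H.Adj x y ∧ s(x, y) ≠ s(u, v)) u v := by
  rw [isAcyclic_iff_forall_adj_isBridge]
  constructor
  · intro h u hu v hv huv hr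
    have hb := @h ⟨u, hu⟩ ⟨v, hv⟩ huv
    rw [isBridge_iff] at hb
    apply hb
    have key : ∀ w, Relation.ReflTransGen
        (fun x y => x ∈ F ∧ y ∈ F ∧ H.Adj x y ∧ s(x, y) ≠ s(u, v)) u w →
        ∃ hw : w ∈ F, ((H.induce F).deleteEdges
          {s((⟨u, hu⟩ : F), (⟨v, hv⟩ : F))}).Reachable ⟨u, hu⟩ ⟨w, hw⟩ := by
      intro w hw
      induction hw with
      | refl => exact ⟨hu, Reachable.refl _⟩
      | @tail x y _ hxy ih =>
        obtain ⟨hx, ih⟩ := ih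
        obtain ⟨_, hy, hadj, hne⟩ := hxy
        refine ⟨hy, ih.trans (Adj.reachable ?_)⟩
        rw [deleteEdges_adj]
        refine ⟨hadj, ?_⟩
        simpa [Sym2.eq_iff] using hne
    exact (key v hr).2
  · rintro h ⟨u, hu⟩ ⟨v, hv⟩ huv
    rw [isBridge_iff, reachable_iff_reflTransGen]
    intro hr
    refine h u hu v hv huv (Relation.ReflTransGen.lift Subtype.val ?_ _ _ hr)
    rintro ⟨x, hx⟩ ⟨y, hy⟩ hxy
    rw [deleteEdges_adj] at hxy
    refine ⟨hx, hy, hxy.1, ?_⟩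
    simpa [Sym2.eq_iff] using hxy.2

/-- Gluing two forests along a pair of nonadjacent vertices `a`, `c`: the union is a forest as
soon as one of the two remains a forest after adding the edge `ac`, because then `a` and `c` lie
in different components of that one. -/
lemma glue_isAcyclic {V : Type*} (G : SimpleGraph V) {F₁ F₂ : Set V} {a c : V}
    (hac : a ≠ c) (hnadj : ¬ G.Adj a c)
    (ha₁ : a ∈ F₁) (hc₁ : c ∈ F₁) (ha₂ : a ∈ F₂) (hc₂ : c ∈ F₂)
    (hint : ∀ v ∈ F₁, v ∈ F₂ → v = a ∨ v = c)
    (hadj : ∀ x ∈ F₁ ∪ F₂, ∀ y ∈ F₁ ∪ F₂, G.Adj x y →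
      (x ∈ F₁ ∧ y ∈ F₁) ∨ (x ∈ F₂ ∧ y ∈ F₂))
    (h₁ : (G.induce F₁).IsAcyclic) (h₂ : ((G ⊔ edge a c).induce F₂).IsAcyclic) :
    (G.induce (F₁ ∪ F₂)).IsAcyclic := by
  rw [induce_isAcyclic_iff] at h₁ h₂ ⊢
  intro u hu v hv huv hr
  have hle : ∀ {x y}, G.Adj x y → (G ⊔ edge a c).Adj x y := fun h => Or.inl h
  have hedge : (G ⊔ edge a c).Adj a c := Or.inr ((edge_adj ..).2 ⟨Or.inl ⟨rfl, rfl⟩, hac⟩)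
  have hne : ∀ {x y}, G.Adj x y → s(a, c) ≠ s(x, y) := by
    intro x y hxy he
    rcases Sym2.eq_iff.1 he with ⟨rfl, rfl⟩ | ⟨rfl, rfl⟩
    · exact hnadj hxy
    · exact hnadj hxy.symm
  rcases hadj u hu v hv huv with ⟨hu1, hv1⟩ | ⟨hu2, hv2⟩
  · -- An excursion into `F₂` must leave through the vertex it entered by.
    refine h₁ u hu1 v hv1 huv ?_
    set T : V → V → Prop := fun x y => x ∈ F₁ ∧ y ∈ F₁ ∧ G.Adj x y ∧ s(x, y) ≠ s(u, v)
    set Q : V → V → Prop := fun x y => x ∈ F₂ ∧ y ∈ F₂ ∧ G.Adj x y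
    have hQ : ¬ Relation.ReflTransGen Q a c := by
      intro hq
      refine h₂ a ha₂ c hc₂ hedge (Relation.ReflTransGen.mono ?_ _ _ hq)
      rintro x y ⟨hx, hy, hxy⟩
      exact ⟨hx, hy, hle hxy, (hne hxy).symm⟩
    have hQsymm : ∀ x y, Relation.ReflTransGen Q x y → Relation.ReflTransGen Q y x := by
      intro x y h
      have : Std.Symm Q := ⟨fun x y h => ⟨h.2.1, h.1, h.2.2.symm⟩⟩
      exact Std.Symm.symm _ _ h
    have key : ∀ w, Relation.ReflTransGen (fun x y => x ∈ F₁ ∪ F₂ ∧ y ∈ F₁ ∪ F₂ ∧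
        G.Adj x y ∧ s(x, y) ≠ s(u, v)) u w →
        (w ∈ F₁ → Relation.ReflTransGen T u w) ∧
        (w ∈ F₂ → ∃ t, (t = a ∨ t = c) ∧ Relation.ReflTransGen Q t w ∧
          Relation.ReflTransGen T u t) := by
      intro w hw
      induction hw with
      | refl => exact ⟨fun _ => .refl, fun h => ⟨u, hint u hu1 h, .refl, .refl⟩⟩
      | @tail x y _ hxy ih =>
        obtain ⟨hx, hy, hxy, hs⟩ := hxy
        rcases hadj x hx y hy hxy with ⟨hx1, hy1⟩ | ⟨hx2, hy2⟩
        · have hT : Relation.ReflTransGen T u y := (ih.1 hx1).tail ⟨hx1, hy1, hxy, hs⟩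
          exact ⟨fun _ => hT, fun hy2 => ⟨y, hint y hy1 hy2, .refl, hT⟩⟩
        · obtain ⟨t, ht, htx, hut⟩ := ih.2 hx2
          have hty : Relation.ReflTransGen Q t y := htx.tail ⟨hx2, hy2, hxy⟩
          refine ⟨fun hy1 => ?_, fun _ => ⟨t, ht, hty, hut⟩⟩
          have : t = y := by
            rcases ht with rfl | rfl <;> rcases hint y hy1 hy2 with rfl | rfl
            · rfl
            · exact absurd hty hQ
            · exact absurd (hQsymm _ _ hty) hQ
            · rfl
          exact this ▸ hut
    exact (key v hr).1 hv1
  · -- An excursion into `F₁` can be replaced by the edge `ac`.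
    refine h₂ u hu2 v hv2 (hle huv) ?_
    set T : V → V → Prop := fun x y =>
      x ∈ F₂ ∧ y ∈ F₂ ∧ (G ⊔ edge a c).Adj x y ∧ s(x, y) ≠ s(u, v)
    have hTac : T a c := ⟨ha₂, hc₂, hedge, hne huv⟩
    have hTca : T c a := ⟨hc₂, ha₂, hedge.symm, by rw [Sym2.eq_swap]; exact hne huv⟩
    have hTa : ∀ w, w = a ∨ w = c →
        (Relation.ReflTransGen T u w ↔ Relation.ReflTransGen T u a) := by
      rintro w (rfl | rfl)
      · rfl
      · exact ⟨fun h => h.tail hTca, fun h => h.tail hTac⟩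
    have key : ∀ w, Relation.ReflTransGen (fun x y => x ∈ F₁ ∪ F₂ ∧ y ∈ F₁ ∪ F₂ ∧
        G.Adj x y ∧ s(x, y) ≠ s(u, v)) u w →
        (w ∈ F₂ → Relation.ReflTransGen T u w) ∧
        (w ∈ F₁ → Relation.ReflTransGen T u a) := by
      intro w hw
      induction hw with
      | refl => exact ⟨fun _ => .refl, fun h => (hTa u (hint u h hu2)).1 .refl⟩
      | @tail x y _ hxy ih =>
        obtain ⟨hx, hy, hxy, hs⟩ := hxy
        rcases hadj x hx y hy hxy with ⟨hx1, hy1⟩ | ⟨hx2, hy2⟩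
        · have hT := ih.2 hx1
          exact ⟨fun hy2 => (hTa y (hint y hy1 hy2)).2 hT, fun _ => hT⟩
        · have hT : Relation.ReflTransGen T u y := (ih.1 hx2).tail ⟨hx2, hy2, hle hxy, hs⟩
          exact ⟨fun _ => hT, fun hy1 => (hTa y (hint y hy1 hy2)).1 hT⟩
    exact (key v hr).1 hv2

/-! ### Forest cuts of induced subgraphs -/

/-- `F` is a forest cut of `H[S]` with sides `A` and `B`, all seen as subsets of the ambient
vertex set. -/
structure ForestCutIn {V : Type*} (H : SimpleGraph V) (S F A B : Set V) : Prop where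
  nonempty_left : A.Nonempty
  nonempty_right : B.Nonempty
  mem_iff : ∀ v, v ∈ S ↔ v ∈ F ∨ v ∈ A ∨ v ∈ B
  notMem_left : ∀ v ∈ F, v ∉ A
  notMem_right : ∀ v ∈ F, v ∉ B
  disj : ∀ v ∈ A, v ∉ B
  nadj : ∀ x ∈ A, ∀ y ∈ B, ¬ H.Adj x y
  acyclic : (H.induce F).IsAcyclic

lemma ForestCutIn.symm {V : Type*} {H : SimpleGraph V} {S F A B : Set V}
    (h : ForestCutIn H S F A B) : ForestCutIn H S F B A where
  nonempty_left := h.nonempty_right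
  nonempty_right := h.nonempty_left
  mem_iff v := by rw [h.mem_iff v]; tauto
  notMem_left := h.notMem_right
  notMem_right := h.notMem_left
  disj v hB hA := h.disj v hA hB
  nadj x hx y hy hxy := h.nadj y hy x hx hxy.symm
  acyclic := h.acyclic

lemma ForestCutIn.hasPsiCut {V : Type} {G : SimpleGraph V} {F A B : Set V}
    (h : ForestCutIn G Set.univ F A B) : HasPsiCut ForestClass G := by
  refine ⟨F, ⟨A, B, h.nonempty_left, h.nonempty_right, ?_, ?_, h.nadj⟩, h.acyclic⟩
  · exact Set.disjoint_left.2 h.disj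
  · ext v
    have h1 := h.mem_iff v
    have h2 := h.notMem_left v
    have h3 := h.notMem_right v
    simp only [Set.mem_univ, true_iff] at h1
    simp only [Set.mem_union, Set.mem_compl_iff]
    tauto

/-- A forest cut of the graph `H.induce S` on the subtype, transported to the ambient type. -/
lemma exists_forestCutIn {V : Type} {H : SimpleGraph V} {S : Set V}
    (h : HasPsiCut ForestClass (H.induce S)) : ∃ F A B, ForestCutIn H S F A B := by
  obtain ⟨M, ⟨A, B, hA, hB, hdisj, hun, hnadj⟩, hac⟩ := h
  have hun' : ∀ v : S, v ∈ A ∨ v ∈ B ↔ v ∉ M := fun v => by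
    rw [← Set.mem_union, hun, Set.mem_compl_iff]
  refine ⟨Subtype.val '' M, Subtype.val '' A, Subtype.val '' B, hA.image _, hB.image _,
    ?_, ?_, ?_, ?_, ?_, ?_⟩
  · intro v
    constructor
    · intro hv
      have := hun' ⟨v, hv⟩
      by_cases hM : (⟨v, hv⟩ : S) ∈ M
      · exact Or.inl ⟨_, hM, rfl⟩
      · rcases this.2 hM with h | h
        · exact Or.inr (Or.inl ⟨_, h, rfl⟩)
        · exact Or.inr (Or.inr ⟨_, h, rfl⟩)
    · rintro (⟨w, _, rfl⟩ | ⟨w, _, rfl⟩ | ⟨w, _, rfl⟩) <;> exact w.2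
  · rintro _ ⟨w, hw, rfl⟩ ⟨w', hw', he⟩
    obtain rfl := Subtype.ext he
    exact (hun' w').1 (Or.inl hw') hw
  · rintro _ ⟨w, hw, rfl⟩ ⟨w', hw', he⟩
    obtain rfl := Subtype.ext he
    exact (hun' w').1 (Or.inr hw') hw
  · rintro _ ⟨w, hw, rfl⟩ ⟨w', hw', he⟩
    obtain rfl := Subtype.ext he
    exact Set.disjoint_left.1 hdisj hw hw'
  · rintro _ ⟨w, hw, rfl⟩ _ ⟨w', hw', rfl⟩ hadj
    exact hnadj w hw w' hw' hadj
  · have hac' : ((H.induce S).induce M).IsAcyclic := hac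
    let f : H.induce (Subtype.val '' M) →g (H.induce S).induce M :=
      { toFun := fun x => ⟨⟨x.1, by obtain ⟨w, _, hw⟩ := x.2; exact hw ▸ w.2⟩, by
          obtain ⟨_, w, hM, rfl⟩ := x; exact hM⟩
        map_rel' := fun h => h }
    refine hac'.comap f ?_
    intro x y hxy
    exact Subtype.ext (congrArg (fun z => z.1.1) hxy)

/-- The edges of `G` with both ends in `S`. -/
def edgesIn {V : Type*} (G : SimpleGraph V) (S : Set V) : Set (Sym2 V) :=
  {e | e ∈ G.edgeSet ∧ ∀ v ∈ e, v ∈ S}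

lemma card_edgeSet_induce_le {V : Type*} [Finite V] (G : SimpleGraph V) (S : Set V) :
    Nat.card (G.induce S).edgeSet ≤ (edgesIn G S).ncard := by
  rw [← Nat.card_coe_set_eq]
  refine Nat.card_le_card_of_injective
    (fun e : (G.induce S).edgeSet => (⟨Sym2.map Subtype.val e.1, ?_⟩ : edgesIn G S)) ?_
  · obtain ⟨e, he⟩ := e
    induction e using Sym2.ind with
    | _ x y =>
      refine ⟨he, ?_⟩
      intro v hv
      simp only [Sym2.map_mk, Sym2.mem_iff] at hv
      rcases hv with rfl | rfl
      exacts [x.2, y.2]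
  · intro e e' h
    exact Subtype.ext (Sym2.map.injective Subtype.val_injective (congrArg Subtype.val h))

lemma edgesIn_sup_edge {V : Type*} [Finite V] (G : SimpleGraph V) (S : Set V) (a c : V) :
    (edgesIn (G ⊔ edge a c) S).ncard ≤ (edgesIn G S).ncard + 1 := by
  refine (Set.ncard_le_ncard (t := insert s(a, c) (edgesIn G S)) ?_ (Set.toFinite _)).trans
    (Set.ncard_insert_le _ _)
  rintro e ⟨he, hS⟩
  induction e using Sym2.ind with
  | _ x y =>
    rw [mem_edgeSet, sup_adj, edge_adj] at he
    rcases he with he | ⟨he, _⟩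
    · exact Or.inr ⟨he, hS⟩
    · left
      rw [Sym2.eq_iff]
      tauto

/-- The form in which minimality is used: a graph `H[S]` that is smaller than `G` and has
positive quality has a forest cut. -/
lemma exists_forestCutIn_of_minimal {V : Type} [Finite V] {G : SimpleGraph V} {α β : ℝ}
    (hG : MinCounterexample ForestClass α β G) (H : SimpleGraph V) (S : Set V)
    (h4 : 4 ≤ S.ncard) (hlt : S.ncard < Nat.card V) (n : ℕ) (hn : (edgesIn H S).ncard ≤ n)
    (hq : 0 < α * S.ncard - n - β) : ∃ F A B, ForestCutIn H S F A B := by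
  apply exists_forestCutIn
  refine hG.2.2.2 S (H.induce S) ?_ ?_ ?_
  · rwa [Nat.card_coe_set_eq]
  · rwa [Nat.card_coe_set_eq]
  · have h1 : ((Nat.card (H.induce S).edgeSet : ℕ) : ℝ) ≤ n := by
      exact_mod_cast (card_edgeSet_induce_le H S).trans hn
    rw [quality, Nat.card_coe_set_eq]
    linarith

/-! ### Combining the two sides of a separation -/

/-- `M` separates the (possibly empty) sets `L` and `R` in `G`. -/
structure Separates {V : Type*} (G : SimpleGraph V) (M L R : Set V) : Prop where
  cover : ∀ v, v ∈ M ∨ v ∈ L ∨ v ∈ R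
  notMem_left : ∀ v ∈ M, v ∉ L
  notMem_right : ∀ v ∈ M, v ∉ R
  disj : ∀ v ∈ L, v ∉ R
  nadj : ∀ x ∈ L, ∀ y ∈ R, ¬ G.Adj x y

lemma Separates.symm {V : Type*} {G : SimpleGraph V} {M L R : Set V} (h : Separates G M L R) :
    Separates G M R L where
  cover v := by have := h.cover v; tauto
  notMem_left := h.notMem_right
  notMem_right := h.notMem_left
  disj v hR hL := h.disj v hL hR
  nadj x hx y hy hxy := h.nadj y hy x hx hxy.symm

lemma hasPsiCut_of_inter_eq_empty {V : Type} {G H : SimpleGraph V} {M L R F A B : Set V}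
    (hs : Separates G M L R) (hle : G ≤ H) (hc : ForestCutIn H (M ∪ R) F A B)
    (hA : ∀ v ∈ M, v ∉ A) : HasPsiCut ForestClass G := by
  have hAR : ∀ v ∈ A, v ∈ R := fun v hv =>
    ((hc.mem_iff v).2 (Or.inr (Or.inl hv))).resolve_left fun h => hA v h hv
  refine ForestCutIn.hasPsiCut (F := F) (A := A) (B := B ∪ L)
    ⟨hc.nonempty_left, hc.nonempty_right.inl, ?_, hc.notMem_left, ?_, ?_, ?_, ?_⟩
  · intro v
    have h1 := hs.cover v
    have h2 := hc.mem_iff v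
    simp only [Set.mem_union, Set.mem_univ, true_iff] at h2 ⊢
    tauto
  · rintro v hv (h | h)
    · exact hc.notMem_right v hv h
    · rcases (hc.mem_iff v).2 (Or.inl hv) with h' | h'
      · exact hs.notMem_left v h' h
      · exact hs.disj v h h'
  · rintro v hv (h | h)
    · exact hc.disj v hv h
    · exact hs.disj v h (hAR v hv)
  · rintro x hx y (hy | hy) hxy
    · exact hc.nadj x hx y hy (hle hxy)
    · exact hs.nadj y hy x (hAR x hx) hxy.symm
  · exact hc.acyclic.anti (fun x y h => hle h)

/-- If `G` has no forest cut, then a forest cut of one side, possibly with extra edges, must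
split the separator `M`; otherwise the other side could be attached to one of the parts. -/
lemma exists_split {V : Type} {G H : SimpleGraph V} {M L R F A B : Set V}
    (hs : Separates G M L R) (hle : G ≤ H) (hno : ¬ HasPsiCut ForestClass G)
    (hc : ForestCutIn H (M ∪ R) F A B) :
    ∃ x ∈ M, ∃ y ∈ M, x ∈ A ∧ y ∈ B ∧ x ≠ y ∧ ¬ H.Adj x y := by
  have h1 : ∃ x ∈ M, x ∈ A := by
    by_contra! h
    exact hno (hasPsiCut_of_inter_eq_empty hs hle hc h)
  have h2 : ∃ y ∈ M, y ∈ B := by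
    by_contra! h
    exact hno (hasPsiCut_of_inter_eq_empty hs hle hc.symm h)
  obtain ⟨x, hxM, hx⟩ := h1
  obtain ⟨y, hyM, hy⟩ := h2
  exact ⟨x, hxM, y, hyM, hx, hy, fun h => hc.disj x hx (h ▸ hy), hc.nadj x hx y hy⟩

/-- `M` induces in `G` the 4-cycle with consecutive vertices `a`, `b`, `c`, `d`. -/
structure IsC4 {V : Type*} (G : SimpleGraph V) (M : Set V) (a b c d : V) : Prop where
  mem_iff : ∀ v, v ∈ M ↔ v = a ∨ v = b ∨ v = c ∨ v = d
  ac : a ≠ c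
  bd : b ≠ d
  ab : G.Adj a b
  bc : G.Adj b c
  cd : G.Adj c d
  da : G.Adj d a
  nac : ¬ G.Adj a c
  nbd : ¬ G.Adj b d

lemma IsC4.rotate {V : Type*} {G : SimpleGraph V} {M : Set V} {a b c d : V}
    (h : IsC4 G M a b c d) : IsC4 G M b c d a where
  mem_iff v := by rw [h.mem_iff v]; tauto
  ac := h.bd
  bd := h.ac.symm
  ab := h.bc
  bc := h.cd
  cd := h.da
  da := h.ab
  nac := h.nbd
  nbd h' := h.nac h'.symm

/-- A cut of a graph containing the 4-cycle that has `b` and `d` on different sides contains their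
common neighbours `a` and `c`. -/
lemma IsC4.mem_cut {V : Type*} {G H : SimpleGraph V} {M R F A B : Set V} {a b c d : V}
    (h4 : IsC4 G M a b c d) (hle : G ≤ H) (hc : ForestCutIn H (M ∪ R) F A B)
    (hb : b ∈ A) (hd : d ∈ B) : a ∈ F ∧ c ∈ F := by
  constructor
  · rcases (hc.mem_iff a).1 (Or.inl ((h4.mem_iff a).2 (by simp))) with h | h | h
    · exact h
    · exact absurd (hle h4.da.symm) (hc.nadj a h d hd)
    · exact absurd (hle h4.ab.symm) (hc.nadj b hb a h)
  · rcases (hc.mem_iff c).1 (Or.inl ((h4.mem_iff c).2 (by simp))) with h | h | h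
    · exact h
    · exact absurd (hle h4.cd) (hc.nadj c h d hd)
    · exact absurd (hle h4.bc) (hc.nadj b hb c h)

/-- Two forest cuts, one on each side, that both separate `b` from `d` combine to a forest cut
of `G`. -/
lemma hasPsiCut_of_aligned {V : Type} {G : SimpleGraph V} {M L R : Set V} {a b c d : V}
    (hs : Separates G M L R) (h4 : IsC4 G M a b c d) {F₁ A₁ B₁ F₂ A₂ B₂ : Set V}
    (h₁ : ForestCutIn G (M ∪ L) F₁ A₁ B₁) (h₂ : ForestCutIn (G ⊔ edge a c) (M ∪ R) F₂ A₂ B₂)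
    (hb₁ : b ∈ A₁) (hd₁ : d ∈ B₁) (hb₂ : b ∈ A₂) (hd₂ : d ∈ B₂) :
    HasPsiCut ForestClass G := by
  obtain ⟨ha₁, hc₁⟩ := h4.mem_cut le_rfl h₁ hb₁ hd₁
  obtain ⟨ha₂, hc₂⟩ := h4.mem_cut le_sup_left h₂ hb₂ hd₂
  have hle : ∀ {x y}, G.Adj x y → (G ⊔ edge a c).Adj x y := fun h => Or.inl h
  have memM := h4.mem_iff
  have m₁ := h₁.mem_iff
  have m₂ := h₂.mem_iff
  simp only [Set.mem_union] at m₁ m₂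
  have cover := hs.cover
  have s1 := hs.notMem_left
  have s2 := hs.notMem_right
  have s3 := hs.disj
  have s4 := hs.nadj
  have p1 := h₁.notMem_left
  have p2 := h₁.notMem_right
  have p3 := h₁.disj
  have p4 := h₁.nadj
  have q1 := h₂.notMem_left
  have q2 := h₂.notMem_right
  have q3 := h₂.disj
  have q4 : ∀ x ∈ A₂, ∀ y ∈ B₂, ¬ G.Adj x y := fun x hx y hy h => h₂.nadj x hx y hy (hle h)
  -- A vertex lying in pieces of both cuts is in `M`, where the two cuts agree.
  have both : ∀ v, (v ∈ F₁ ∨ v ∈ A₁ ∨ v ∈ B₁) → (v ∈ F₂ ∨ v ∈ A₂ ∨ v ∈ B₂) →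
      v = a ∨ v = b ∨ v = c ∨ v = d := by
    intro v hv₁ hv₂
    rw [← m₁] at hv₁
    rw [← m₂] at hv₂
    rw [← memM]
    have := s3 v
    tauto
  have side : ∀ x y, G.Adj x y → ((x ∈ M ∨ x ∈ L) ∧ (y ∈ M ∨ y ∈ L)) ∨
      ((x ∈ M ∨ x ∈ R) ∧ (y ∈ M ∨ y ∈ R)) := by
    intro x y hxy
    have e1 := cover x
    have e2 := cover y
    have e3 : x ∈ L → y ∈ R → False := fun hx hy => s4 x hx y hy hxy
    have e4 : y ∈ L → x ∈ R → False := fun hy hx => s4 y hy x hx hxy.symm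
    tauto
  have agreeF : ∀ v, (v ∈ M ∨ v ∈ L) → v ∈ F₂ → v ∈ F₁ := by
    intro v hv hF
    rcases both v ((m₁ v).1 hv) (Or.inl hF) with rfl | rfl | rfl | rfl
    · exact ha₁
    · exact absurd hb₂ (q1 _ hF)
    · exact hc₁
    · exact absurd hd₂ (q2 _ hF)
  have agreeF' : ∀ v, (v ∈ M ∨ v ∈ R) → v ∈ F₁ → v ∈ F₂ := by
    intro v hv hF
    rcases both v (Or.inl hF) ((m₂ v).1 hv) with rfl | rfl | rfl | rfl
    · exact ha₂
    · exact absurd hb₁ (p1 _ hF)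
    · exact hc₂
    · exact absurd hd₁ (p2 _ hF)
  have agreeA : ∀ v, (v ∈ M ∨ v ∈ L) → v ∈ A₂ → v ∈ A₁ := by
    intro v hv hA
    rcases both v ((m₁ v).1 hv) (Or.inr (Or.inl hA)) with rfl | rfl | rfl | rfl
    · exact absurd hA (q1 _ ha₂)
    · exact hb₁
    · exact absurd hA (q1 _ hc₂)
    · exact absurd hd₂ (q3 _ hA)
  have agreeA' : ∀ v, (v ∈ M ∨ v ∈ R) → v ∈ A₁ → v ∈ A₂ := by
    intro v hv hA
    rcases both v (Or.inr (Or.inl hA)) ((m₂ v).1 hv) with rfl | rfl | rfl | rfl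
    · exact absurd hA (p1 _ ha₁)
    · exact hb₂
    · exact absurd hA (p1 _ hc₁)
    · exact absurd hd₁ (p3 _ hA)
  have agreeB : ∀ v, (v ∈ M ∨ v ∈ L) → v ∈ B₂ → v ∈ B₁ := by
    intro v hv hB
    rcases both v ((m₁ v).1 hv) (Or.inr (Or.inr hB)) with rfl | rfl | rfl | rfl
    · exact absurd hB (q2 _ ha₂)
    · exact absurd hB (q3 _ hb₂)
    · exact absurd hB (q2 _ hc₂)
    · exact hd₁
  have agreeB' : ∀ v, (v ∈ M ∨ v ∈ R) → v ∈ B₁ → v ∈ B₂ := by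
    intro v hv hB
    rcases both v (Or.inr (Or.inr hB)) ((m₂ v).1 hv) with rfl | rfl | rfl | rfl
    · exact absurd hB (p2 _ ha₁)
    · exact absurd hB (p3 _ hb₁)
    · exact absurd hB (p2 _ hc₁)
    · exact hd₂
  refine ForestCutIn.hasPsiCut (F := F₁ ∪ F₂) (A := A₁ ∪ A₂) (B := B₁ ∪ B₂)
    ⟨⟨b, Or.inl hb₁⟩, ⟨d, Or.inl hd₁⟩, ?_, ?_, ?_, ?_, ?_, ?_⟩
  · intro v
    have e1 := cover v
    have e2 := m₁ v
    have e3 := m₂ v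
    simp only [Set.mem_union, Set.mem_univ, true_iff]
    tauto
  · rintro v (hF | hF) (hA | hA)
    · exact p1 v hF hA
    · exact q1 v (agreeF' v ((m₂ v).2 (Or.inr (Or.inl hA))) hF) hA
    · exact p1 v (agreeF v ((m₁ v).2 (Or.inr (Or.inl hA))) hF) hA
    · exact q1 v hF hA
  · rintro v (hF | hF) (hB | hB)
    · exact p2 v hF hB
    · exact q2 v (agreeF' v ((m₂ v).2 (Or.inr (Or.inr hB))) hF) hB
    · exact p2 v (agreeF v ((m₁ v).2 (Or.inr (Or.inr hB))) hF) hB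
    · exact q2 v hF hB
  · rintro v (hA | hA) (hB | hB)
    · exact p3 v hA hB
    · exact q3 v (agreeA' v ((m₂ v).2 (Or.inr (Or.inr hB))) hA) hB
    · exact p3 v (agreeA v ((m₁ v).2 (Or.inr (Or.inr hB))) hA) hB
    · exact q3 v hA hB
  · intro x hx y hy hxy
    rcases side x y hxy with ⟨hx', hy'⟩ | ⟨hx', hy'⟩
    · exact p4 x (hx.elim id (agreeA x hx')) y (hy.elim id (agreeB y hy')) hxy
    · exact q4 x (hx.elim (agreeA' x hx') id) y (hy.elim (agreeB' y hy') id) hxy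
  · refine glue_isAcyclic G h4.ac h4.nac ha₁ hc₁ ha₂ hc₂ ?_ ?_ h₁.acyclic h₂.acyclic
    · intro v hv₁ hv₂
      rcases both v (Or.inl hv₁) (Or.inl hv₂) with rfl | rfl | rfl | rfl
      · exact Or.inl rfl
      · exact absurd hb₁ (p1 _ hv₁)
      · exact Or.inr rfl
      · exact absurd hd₁ (p2 _ hv₁)
    · intro x hx y hy hxy
      rcases side x y hxy with ⟨hx', hy'⟩ | ⟨hx', hy'⟩
      · exact Or.inl ⟨hx.elim id (agreeF x hx'), hy.elim id (agreeF y hy')⟩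
      · exact Or.inr ⟨hx.elim (agreeF' x hx') id, hy.elim (agreeF' y hy') id⟩

/-- With the chord `ac` present, only `b` and `d` can be split, so any forest cut of the other side
aligns with one separating `b` from `d`. -/
lemma hasPsiCut_of_chord {V : Type} {G : SimpleGraph V} {M L R : Set V} {a b c d : V}
    (hs : Separates G M L R) (h4 : IsC4 G M a b c d) (hno : ¬ HasPsiCut ForestClass G)
    {F₁ A₁ B₁ F₂ A₂ B₂ : Set V}
    (h₁ : ForestCutIn G (M ∪ L) F₁ A₁ B₁) (h₂ : ForestCutIn (G ⊔ edge a c) (M ∪ R) F₂ A₂ B₂)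
    (hb₁ : b ∈ A₁) (hd₁ : d ∈ B₁) : False := by
  obtain ⟨x, hxM, y, hyM, hx, hy, hne, hnadj⟩ := exists_split hs le_sup_left hno h₂
  rw [sup_adj, edge_adj] at hnadj
  have := h4.ab
  have := h4.bc
  have := h4.cd
  have := h4.da
  have hsymm := fun u v => G.adj_comm u v
  have hxy : (x = b ∧ y = d) ∨ (x = d ∧ y = b) := by
    rcases (h4.mem_iff x).1 hxM with rfl | rfl | rfl | rfl <;>
      rcases (h4.mem_iff y).1 hyM with rfl | rfl | rfl | rfl <;> grind
  rcases hxy with ⟨rfl, rfl⟩ | ⟨rfl, rfl⟩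
  · exact hno (hasPsiCut_of_aligned hs h4 h₁ h₂ hb₁ hd₁ hx hy)
  · exact hno (hasPsiCut_of_aligned hs h4 h₁ h₂.symm hb₁ hd₁ hy hx)

/-- A graph without forest cuts has no `C₄` separator such that one side has a forest cut and the
other side has one for either choice of added diagonal. -/
lemma false_of_forestCuts {V : Type} {G : SimpleGraph V} {M L R : Set V} {a b c d : V}
    (hs : Separates G M L R) (h4 : IsC4 G M a b c d) (hno : ¬ HasPsiCut ForestClass G)
    (h₁ : ∃ F A B, ForestCutIn G (M ∪ L) F A B)
    (hac : ∃ F A B, ForestCutIn (G ⊔ edge a c) (M ∪ R) F A B)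
    (hbd : ∃ F A B, ForestCutIn (G ⊔ edge b d) (M ∪ R) F A B) : False := by
  obtain ⟨F₁, A₁, B₁, h₁⟩ := h₁
  obtain ⟨_, _, _, hac⟩ := hac
  obtain ⟨_, _, _, hbd⟩ := hbd
  obtain ⟨x, hxM, y, hyM, hx, hy, hne, hnadj⟩ := exists_split hs.symm le_rfl hno h₁
  have := h4.ab
  have := h4.bc
  have := h4.cd
  have := h4.da
  have hsymm := fun u v => G.adj_comm u v
  have hxy : (x = b ∧ y = d) ∨ (x = d ∧ y = b) ∨ (x = a ∧ y = c) ∨ (x = c ∧ y = a) := by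
    rcases (h4.mem_iff x).1 hxM with rfl | rfl | rfl | rfl <;>
      rcases (h4.mem_iff y).1 hyM with rfl | rfl | rfl | rfl <;> grind
  rcases hxy with ⟨rfl, rfl⟩ | ⟨rfl, rfl⟩ | ⟨rfl, rfl⟩ | ⟨rfl, rfl⟩
  · exact hasPsiCut_of_chord hs h4 hno h₁ hac hx hy
  · exact hasPsiCut_of_chord hs h4 hno h₁.symm hac hy hx
  · exact hasPsiCut_of_chord hs h4.rotate hno h₁.symm hbd hy hx
  · exact hasPsiCut_of_chord hs h4.rotate hno h₁ hbd hx hy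

lemma false_of_both_chords {V : Type} {G : SimpleGraph V} {M L R : Set V} {a b c d : V}
    (hs : Separates G M L R) (h4 : IsC4 G M a b c d) (hno : ¬ HasPsiCut ForestClass G)
    (h : ∃ F A B, ForestCutIn (G ⊔ edge a c ⊔ edge b d) (M ∪ R) F A B) : False := by
  obtain ⟨F, A, B, h⟩ := h
  obtain ⟨x, hxM, y, hyM, hx, hy, hne, hnadj⟩ :=
    exists_split hs (le_sup_left.trans le_sup_left) hno h
  rw [sup_adj, sup_adj, edge_adj, edge_adj] at hnadj
  have := h4.ab
  have := h4.bc
  have := h4.cd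
  have := h4.da
  have hsymm := fun u v => G.adj_comm u v
  rcases (h4.mem_iff x).1 hxM with rfl | rfl | rfl | rfl <;>
    rcases (h4.mem_iff y).1 hyM with rfl | rfl | rfl | rfl <;> grind

/-! ### Counting -/

lemma IsC4.ncard_eq {V : Type*} {G : SimpleGraph V} {M : Set V} {a b c d : V}
    (h : IsC4 G M a b c d) : M.ncard = 4 := by
  have hM : M = {a, b, c, d} := by
    ext v
    simpa using h.mem_iff v
  rw [hM]
  have h1 := h.ab.ne
  have h2 := h.bc.ne
  have h3 := h.cd.ne
  have h4 := h.da.ne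
  have h5 := h.ac
  have h6 := h.bd
  rw [Set.ncard_insert_of_notMem (by simp; tauto), Set.ncard_insert_of_notMem (by simp; tauto),
    Set.ncard_pair h3]

lemma IsC4.ncard_edgesIn_le {V : Type*} {G : SimpleGraph V} {M : Set V} {a b c d : V}
    (h : IsC4 G M a b c d) : (edgesIn G M).ncard ≤ 4 := by
  have hsub : edgesIn G M ⊆ {s(a, b), s(b, c), s(c, d), s(d, a)} := by
    rintro e ⟨he, hM⟩
    induction e using Sym2.ind with
    | _ x y =>
      have hx := (h.mem_iff x).1 (hM x (by simp))
      have hy := (h.mem_iff y).1 (hM y (by simp))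
      rw [mem_edgeSet] at he
      have h1 := h.nac
      have h2 := h.nbd
      have h3 := he.ne
      have hsymm := fun u v => G.adj_comm u v
      rcases hx with rfl | rfl | rfl | rfl <;> rcases hy with rfl | rfl | rfl | rfl <;>
        grind
  refine (Set.ncard_le_ncard hsub (Set.toFinite _)).trans ?_
  refine (Set.ncard_insert_le _ _).trans (Nat.succ_le_succ ?_)
  refine (Set.ncard_insert_le _ _).trans (Nat.succ_le_succ ?_)
  exact (Set.ncard_insert_le _ _).trans (by rw [Set.ncard_singleton])

lemma Separates.ncard_add {V : Type*} [Finite V] {G : SimpleGraph V} {M L R : Set V}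
    (hs : Separates G M L R) : (M ∪ L).ncard + (M ∪ R).ncard = Nat.card V + M.ncard := by
  have h1 : (M ∪ L) ∪ (M ∪ R) = Set.univ := by
    ext v
    have := hs.cover v
    simp only [Set.mem_union, Set.mem_univ, iff_true]
    tauto
  have h2 : (M ∪ L) ∩ (M ∪ R) = M := by
    ext v
    have := hs.disj v
    simp only [Set.mem_union, Set.mem_inter_iff]
    tauto
  rw [← Set.ncard_union_add_ncard_inter, h1, h2, Set.ncard_univ]

lemma Separates.edges_add {V : Type*} [Finite V] {G : SimpleGraph V} {M L R : Set V}
    (hs : Separates G M L R) : (edgesIn G (M ∪ L)).ncard + (edgesIn G (M ∪ R)).ncard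
      = Nat.card G.edgeSet + (edgesIn G M).ncard := by
  have h1 : edgesIn G (M ∪ L) ∪ edgesIn G (M ∪ R) = G.edgeSet := by
    ext e
    constructor
    · rintro (h | h) <;> exact h.1
    · intro he
      induction e using Sym2.ind with
      | _ x y =>
        have e1 := hs.cover x
        have e2 := hs.cover y
        have e3 : x ∈ L → y ∈ R → False := fun hx hy => hs.nadj x hx y hy he
        have e4 : y ∈ L → x ∈ R → False := fun hy hx => hs.nadj y hy x hx (G.adj_symm he)
        simp only [edgesIn, Set.mem_union, Set.mem_ofPred_eq, Sym2.mem_iff, forall_eq_or_imp,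
          forall_eq]
        tauto
  have h2 : edgesIn G (M ∪ L) ∩ edgesIn G (M ∪ R) = edgesIn G M := by
    ext e
    constructor
    · rintro ⟨⟨he, hL⟩, ⟨_, hR⟩⟩
      refine ⟨he, fun v hv => ?_⟩
      have e1 := hL v hv
      have e2 := hR v hv
      have e3 := hs.disj v
      simp only [Set.mem_union] at e1 e2
      tauto
    · rintro ⟨he, h⟩
      exact ⟨⟨he, fun v hv => Or.inl (h v hv)⟩, ⟨he, fun v hv => Or.inl (h v hv)⟩⟩
  rw [← Set.ncard_union_add_ncard_inter, h1, h2, Nat.card_coe_set_eq]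

lemma Separates.ncard_lt {V : Type*} [Finite V] {G : SimpleGraph V} {M L R : Set V}
    (hs : Separates G M L R) (hL : L.Nonempty) : (M ∪ R).ncard < Nat.card V := by
  obtain ⟨v, hv⟩ := hL
  rw [← Set.ncard_univ]
  refine Set.ncard_lt_ncard ?_ (Set.toFinite _)
  rw [Set.ssubset_univ_iff]
  intro h
  have : v ∈ M ∪ R := h ▸ Set.mem_univ v
  rcases this with h' | h'
  · exact hs.notMem_left v h' hv
  · exact hs.disj v hv h'

/-- A separating `C₄` is impossible once the qualities of the two sides sum to more than `2`;
by symmetry the side `M ∪ R` may be taken to be the one of larger quality. -/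
lemma false_of_quality {V : Type} [Finite V] {G : SimpleGraph V} {α β : ℝ}
    (hG : MinCounterexample ForestClass α β G) {M L R : Set V} {a b c d : V}
    (hs : Separates G M L R) (hL : L.Nonempty) (hR : R.Nonempty) (h4 : IsC4 G M a b c d)
    (hsum : 2 < (α * (M ∪ L).ncard - (edgesIn G (M ∪ L)).ncard - β)
      + (α * (M ∪ R).ncard - (edgesIn G (M ∪ R)).ncard - β))
    (hle : α * (M ∪ L).ncard - (edgesIn G (M ∪ L)).ncard - β
      ≤ α * (M ∪ R).ncard - (edgesIn G (M ∪ R)).ncard - β) : False := by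
  have hcL : 4 ≤ (M ∪ L).ncard :=
    h4.ncard_eq ▸ Set.ncard_le_ncard Set.subset_union_left (Set.toFinite _)
  have hcR : 4 ≤ (M ∪ R).ncard :=
    h4.ncard_eq ▸ Set.ncard_le_ncard Set.subset_union_left (Set.toFinite _)
  have hltL := hs.symm.ncard_lt hR
  have hltR := hs.ncard_lt hL
  have hno := hG.2.2.1
  by_cases hpos : 0 < α * (M ∪ L).ncard - (edgesIn G (M ∪ L)).ncard - β
  · refine false_of_forestCuts hs h4 hno ?_ ?_ ?_
    · exact exists_forestCutIn_of_minimal hG G _ hcL hltL _ le_rfl hpos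
    · refine exists_forestCutIn_of_minimal hG _ _ hcR hltR _ (edgesIn_sup_edge ..) ?_
      push_cast
      linarith
    · refine exists_forestCutIn_of_minimal hG _ _ hcR hltR _ (edgesIn_sup_edge ..) ?_
      push_cast
      linarith
  · refine false_of_both_chords hs h4 hno ?_
    refine exists_forestCutIn_of_minimal hG _ _ hcR hltR _
      ((edgesIn_sup_edge ..).trans (Nat.succ_le_succ (edgesIn_sup_edge ..))) ?_
    push_cast
    linarith

lemma exists_isC4 {V : Type*} {G : SimpleGraph V} {M : Set V}
    (f : (G.induce M) ≃g SimpleGraph.cycleGraph 4) : ∃ a b c d, IsC4 G M a b c d := by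
  have hadj : ∀ i j, G.Adj (f.symm i).1 (f.symm j).1 ↔ (cycleGraph 4).Adj i j := fun i j =>
    f.symm.map_adj_iff (v := i) (w := j)
  have hinj : ∀ i j, (f.symm i).1 = (f.symm j).1 → i = j := fun i j h =>
    f.symm.injective (Subtype.ext h)
  refine ⟨(f.symm 0).1, (f.symm 1).1, (f.symm 2).1, (f.symm 3).1, ?_, ?_, ?_, ?_, ?_, ?_, ?_,
    ?_, ?_⟩
  · intro v
    constructor
    · intro hv
      have h : (f.symm (f ⟨v, hv⟩)).1 = v := by rw [f.symm_apply_apply]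
      generalize f ⟨v, hv⟩ = i at h
      subst h
      fin_cases i <;> simp
    · rintro (rfl | rfl | rfl | rfl) <;> exact Subtype.prop _
  · exact fun h => absurd (hinj _ _ h) (by decide)
  · exact fun h => absurd (hinj _ _ h) (by decide)
  all_goals
    rw [hadj]
    decide

/-- a minimal counterexample has no cut inducing the 4-cycle `C4`. -/
theorem stmt9 (Ψ : ∀ (W : Type), SimpleGraph W → Prop)
    (hΨ : Ψ = ForestClass ∨ Ψ = BipartiteClass)
    (α β : ℝ) (hα1 : 2 < α) (hα2 : α ≤ 3) (hβ : 4 * α - β = 6)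
    {V : Type} [Fintype V] (G : SimpleGraph V) (hG : MinCounterexample Ψ α β G) :
    ¬ ∃ M : Set V, IsVertexCut G M ∧ Nonempty ((G.induce M) ≃g SimpleGraph.cycleGraph 4) := by
  rintro ⟨M, hcut, ⟨f⟩⟩
  rcases hΨ with rfl | rfl
  · obtain ⟨a, b, c, d, h4⟩ := exists_isC4 f
    obtain ⟨L, R, hL, hR, hdisj, hun, hnadj⟩ := hcut
    have hun' : ∀ v, v ∈ L ∨ v ∈ R ↔ v ∉ M := fun v => by
      rw [← Set.mem_union, hun, Set.mem_compl_iff]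
    have hs : Separates G M L R := by
      refine ⟨?_, ?_, ?_, fun v hv => Set.disjoint_left.1 hdisj hv, hnadj⟩
      · intro v
        have := hun' v
        tauto
      · exact fun v hM h => (hun' v).1 (Or.inl h) hM
      · exact fun v hM h => (hun' v).1 (Or.inr h) hM
    have hq : 0 < quality α β G := hG.2.1
    rw [quality] at hq
    have hv : ((M ∪ L).ncard : ℝ) + (M ∪ R).ncard = Nat.card V + 4 := by
      have := hs.ncard_add
      rw [h4.ncard_eq] at this
      exact_mod_cast this
    have he : ((edgesIn G (M ∪ L)).ncard : ℝ) + (edgesIn G (M ∪ R)).ncard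
        ≤ Nat.card G.edgeSet + 4 := by
      have h1 := hs.edges_add
      have h2 := h4.ncard_edgesIn_le
      have h3 : (edgesIn G (M ∪ L)).ncard + (edgesIn G (M ∪ R)).ncard
        ≤ Nat.card G.edgeSet + 4 := by omega
      exact_mod_cast h3
    have hmul : α * (M ∪ L).ncard + α * (M ∪ R).ncard = α * Nat.card V + 4 * α := by
      rw [← mul_add, hv]
      ring
    -- `q(G[M ∪ L]) + q(G[M ∪ R]) = q(G) + q(C₄)` and `q(C₄) = 4α - 4 - β = 2`.
    have hsum : 2 < (α * (M ∪ L).ncard - (edgesIn G (M ∪ L)).ncard - β)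
        + (α * (M ∪ R).ncard - (edgesIn G (M ∪ R)).ncard - β) := by
      linarith
    rcases le_total (α * (M ∪ L).ncard - (edgesIn G (M ∪ L)).ncard - β)
      (α * (M ∪ R).ncard - (edgesIn G (M ∪ R)).ncard - β) with hle | hle
    · exact false_of_quality hG hs hL hR h4 hsum hle
    · exact false_of_quality hG hs.symm hR hL h4 (by linarith) hle
  · -- `C₄` is itself bipartite, so the cut `M` is already forbidden.
    refine hG.2.2.1 ⟨M, hcut, ?_⟩
    have hcol : (cycleGraph 4).Colorable 2 :=
      ⟨Coloring.mk (fun i : Fin 4 => (⟨i.1 % 2, Nat.mod_lt _ (by norm_num)⟩ : Fin 2))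
        (fun {i j} => by revert i j; decide)⟩
    exact hcol.of_hom f.toHom
end

section
/- Let Ψ be either the class of all forests or the class of all bipartite graphs, let α, β be reals with 2 < α ≤ 3 and 4α − β = 6, and let G be a minimal counterexample for Ψ, α, β. Then every vertex of G has degree at least 4, and for every vertex v of degree exactly 4, the subgraph of G induced on the neighborhood N(v) is isomorphic to T0 or to T1. -/
/-!
The neighbourhood of a vertex `v` is a cut unless `v` is adjacent to all other vertices, so in a
graph without `Ψ`-cuts it must contain a cycle (`not_psi_neighborSet`). This already excludes
degrees below 3, and a degree-3 vertex would have a triangle as neighbourhood.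

Deleting `v` and adding at most `deg v - 3` edges among the other vertices does not decrease the
quality, because `α ≤ 3`. By minimality the reduced graph has a `Ψ`-cut, and this cut extends to a
`Ψ`-cut of `G`, with `v` on one of the sides, unless it separates two neighbours of `v`
(`exists_separated_neighbors`). Hence no vertex of degree at least 3 has a clique as neighbourhood
(`not_isClique_neighborSet`), which excludes degree 3.

For a vertex of degree 4, a neighbourhood containing a cycle is `T0`, `T1` or contains a spanning
4-cycle (`triangle_or_square_of_card_eq_four`). In the last case each diagonal of the 4-cycle must
be an edge (`square_diagonal`): if `a`, `c` are opposite and non-adjacent, reduce to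
`(G - v) + ac`. A forest cut of this graph separating the other two neighbours contains `a` and
`c`, and adding `v` to it merely subdivides the edge `ac`, so it becomes a forest cut of `G`. The
neighbourhood would thus be a clique, which is impossible. Small orders are excluded by counting
edges.
-/

open SimpleGraph

/-! ### Acyclic graphs and graphs on four vertices -/

/-- A cycle in a graph on at most four vertices has length three or four. -/
theorem exists_triangle_or_square {W : Type} (H : SimpleGraph W) [Finite W]
    (hW : Nat.card W ≤ 4) (hH : ¬ H.IsAcyclic) :
    (∃ a b c, H.Adj a b ∧ H.Adj b c ∧ H.Adj c a) ∨
    ∃ a b c d, H.Adj a b ∧ H.Adj b c ∧ H.Adj c d ∧ H.Adj d a ∧ a ≠ c ∧ b ≠ d := by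
  have := Fintype.ofFinite W
  rw [Nat.card_eq_fintype_card] at hW
  simp only [IsAcyclic, not_forall, not_not] at hH
  obtain ⟨u, p, hp⟩ := hH
  have h3 := hp.three_le_length
  have h4 : p.length ≤ 4 := by
    have := hp.isPath_tail.length_lt
    have := Walk.length_tail_add_one hp.not_nil
    omega
  have inj := hp.getVert_injOn'
  have e : p.getVert p.length = p.getVert 0 := by simp
  have adj : ∀ i, i < p.length → H.Adj (p.getVert i) (p.getVert (i+1)) :=
    fun i hi => p.adj_getVert_succ hi
  obtain hl | hl : p.length = 3 ∨ p.length = 4 := by omega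
  · left
    rw [hl] at e adj
    exact ⟨_, _, _, adj 0 (by simp), adj 1 (by simp), e ▸ adj 2 (by simp)⟩
  · right
    rw [hl] at e adj inj
    refine ⟨_, _, _, _, adj 0 (by simp), adj 1 (by simp), adj 2 (by simp), e ▸ adj 3 (by simp), ?_, ?_⟩
    · exact fun h => by simpa using inj (by simp) (by simp) h
    · exact fun h => by simpa using inj (by simp) (by simp) h

/-- A vertex `v` with at most two neighbours `a`, `c`, lying in different components of the forest
`H - v`, is on no cycle: the part of such a cycle avoiding `v` would join `a` to `c`. -/
theorem isAcyclic_of_unreachable_neighbors {U : Type} (H : SimpleGraph U) (v a c : U)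
    (ha : a ∈ ({v}ᶜ : Set U)) (hc : c ∈ ({v}ᶜ : Set U))
    (hN : ∀ x, H.Adj v x → x = a ∨ x = c)
    (hK : (H.induce {v}ᶜ).IsAcyclic)
    (hr : ¬ (H.induce {v}ᶜ).Reachable ⟨a, ha⟩ ⟨c, hc⟩) : H.IsAcyclic := by
  classical
  intro u p hp
  by_cases hv : v ∈ p.support
  · have hq := hp.rotate hv
    set q := p.rotate v hv
    have h1 := hN _ (q.adj_snd hq.not_nil)
    have h2 := hN _ (q.adj_penultimate hq.not_nil).symm
    have h3 := hq.snd_ne_penultimate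
    have hpath := hq.isPath_tail
    have hnn : ¬ q.tail.Nil := by
      have := hq.three_le_length
      have := Walk.length_tail_add_one hq.not_nil
      rw [Walk.not_nil_iff_lt_length]; omega
    have hpen : q.tail.penultimate = q.penultimate := by
      have := Walk.penultimate_cons_of_not_nil (q.adj_snd hq.not_nil) q.tail hnn
      rw [← this, Walk.cons_tail_eq _ hq.not_nil]
    have hs : ∀ x ∈ q.tail.dropLast.support, x ∈ ({v}ᶜ : Set U) := by
      rintro x hx rfl
      have hnd := hpath.support_nodup
      rw [← Walk.support_dropLast_concat hnn, List.nodup_append] at hnd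
      exact hnd.2.2 _ hx _ (by simp) rfl
    have hre : (H.induce {v}ᶜ).Reachable _ _ := ⟨q.tail.dropLast.induce _ hs⟩
    simp only [hpen] at hre
    rcases h1 with h1 | h1 <;> rcases h2 with h2 | h2
    · exact h3 (h1.trans h2.symm)
    · simp only [h1, h2] at hre
      exact hr hre
    · simp only [h1, h2] at hre
      exact hr hre.symm
    · exact h3 (h1.trans h2.symm)
  · have hs : ∀ x ∈ p.support, x ∈ ({v}ᶜ : Set U) := by
      rintro x hx rfl
      exact hv hx
    refine hK (p.induce _ hs) ((Walk.isCycle_map_iff_of_injective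
      (f := (Embedding.induce _).toHom) Subtype.val_injective).1 ?_)
    rw [Walk.map_induce]
    exact hp

/-! ### Edge counts and properties of the two classes -/

theorem card_edgeSet_sup_edge_le {U : Type} [Finite U] (H : SimpleGraph U) (s t : U) :
    Nat.card (H ⊔ edge s t).edgeSet ≤ Nat.card H.edgeSet + 1 := by
  rw [Nat.card_coe_set_eq, Nat.card_coe_set_eq, edgeSet_sup]
  refine (Set.ncard_union_le _ _).trans (Nat.add_le_add_left ?_ _)
  refine (Set.ncard_le_ncard (t := {s(s,t)}) ?_ (Set.toFinite _)).trans (by simp)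
  simp [edge]

theorem card_edgeSet_delete_vertex {V : Type} [Fintype V] (G : SimpleGraph V) (v : V) :
    Nat.card (G.induce {v}ᶜ).edgeSet + vdeg G v = Nat.card G.edgeSet := by
  classical
  have h1 := G.card_edgeFinset_induce_compl_singleton v
  have h2 := G.card_edgeFinset_deleteIncidenceSet v
  have h3 := G.degree_le_card_edgeFinset (v := v)
  have h4 : vdeg G v = G.degree v := by
    rw [vdeg, Set.ncard_eq_toFinset_card', ← card_neighborFinset_eq_degree]; rfl
  simp only [Nat.card_eq_fintype_card, card_edgeSet, h4]
  omega

theorem psi_of_isAcyclic {Ψ : ∀ (W : Type), SimpleGraph W → Prop}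
    (hΨ : Ψ = ForestClass ∨ Ψ = BipartiteClass) {W : Type} {H : SimpleGraph W}
    (h : H.IsAcyclic) : Ψ W H := by
  rcases hΨ with rfl | rfl
  · exact h
  · exact h.colorable_two

theorem psi_of_injective_hom {Ψ : ∀ (W : Type), SimpleGraph W → Prop}
    (hΨ : Ψ = ForestClass ∨ Ψ = BipartiteClass) {W W' : Type} {H : SimpleGraph W}
    {H' : SimpleGraph W'} (f : H →g H') (hf : Function.Injective f) (h : Ψ W' H') : Ψ W H := by
  rcases hΨ with rfl | rfl
  · exact IsAcyclic.comap f hf h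
  · exact Colorable.of_hom f h

/-! ### Neighbourhoods on four vertices -/

theorem nonempty_iso_of_enum {W : Type} [Finite W] (H : SimpleGraph W) (hW : Nat.card W = 4)
    (K : SimpleGraph (Fin 4)) (f : Fin 4 → W) (hf : Function.Injective f)
    (h : ∀ i j, H.Adj (f i) (f j) ↔ K.Adj i j) : Nonempty (H ≃g K) := by
  have := Fintype.ofFinite W
  have hb : Function.Bijective f := by
    rw [Fintype.bijective_iff_injective_and_card]
    exact ⟨hf, by rw [← Nat.card_eq_fintype_card, ← Nat.card_eq_fintype_card, hW]; simp⟩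
  exact ⟨(RelIso.symm ⟨Equiv.ofBijective f hb, by intro i j; exact h i j⟩)⟩

/-- A triangle plus a fourth vertex `d` is `T0` or `T1` if `d` has at most one neighbour in the
triangle; otherwise `d` and the triangle span a 4-cycle. -/
theorem triangle_or_square_of_card_eq_four {W : Type} (H : SimpleGraph W) [Finite W]
    (hW : Nat.card W = 4) (hH : ¬ H.IsAcyclic) :
    Nonempty (H ≃g graphT0) ∨ Nonempty (H ≃g graphT1) ∨
    ∃ a b c d, H.Adj a b ∧ H.Adj b c ∧ H.Adj c d ∧ H.Adj d a ∧ a ≠ c ∧ b ≠ d := by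
  obtain ⟨a, b, c, hab, hbc, hca⟩ | h := exists_triangle_or_square H hW.le hH
  swap
  · exact Or.inr (Or.inr h)
  have hne : ({a, b, c} : Set W) ≠ Set.univ := by
    intro h
    have h1 : ({a, b, c} : Set W).ncard ≤ 3 :=
      (Set.ncard_insert_le _ _).trans (Nat.succ_le_succ ((Set.ncard_insert_le _ _).trans (by simp)))
    rw [h, Set.ncard_univ] at h1
    omega
  obtain ⟨d, hd⟩ := (Set.ne_univ_iff_exists_notMem _).1 hne
  simp only [Set.mem_insert_iff, Set.mem_singleton_iff, not_or] at hd
  obtain ⟨hda, hdb, hdc⟩ := hd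
  have hinj : ∀ x y z : W, x ≠ y → x ≠ z → y ≠ z → d ≠ x → d ≠ y → d ≠ z →
      Function.Injective ![x, y, z, d] := by
    intro x y z h1 h2 h3 h4 h5 h6 i j hij
    fin_cases i <;> fin_cases j <;> simp_all
  have t0 : ∀ x y z : W, H.Adj x y → H.Adj x z → H.Adj y z → d ≠ x → d ≠ y → d ≠ z →
      ¬ H.Adj x d → ¬ H.Adj y d → ¬ H.Adj z d → Nonempty (H ≃g graphT0) := by
    intro x y z h1 h2 h3 h4 h5 h6 h7 h8 h9
    refine nonempty_iso_of_enum H hW _ _ (hinj x y z h1.ne h2.ne h3.ne h4 h5 h6) ?_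
    intro i j
    fin_cases i <;> fin_cases j <;> simp [graphT0, h1, h2, h3, h7, h8, h9, H.adj_comm y x,
      H.adj_comm z x, H.adj_comm z y, H.adj_comm d]
  have t1 : ∀ x y z : W, H.Adj x y → H.Adj x z → H.Adj y z → d ≠ x → d ≠ y → d ≠ z →
      ¬ H.Adj x d → ¬ H.Adj y d → H.Adj z d → Nonempty (H ≃g graphT1) := by
    intro x y z h1 h2 h3 h4 h5 h6 h7 h8 h9
    refine nonempty_iso_of_enum H hW _ _ (hinj x y z h1.ne h2.ne h3.ne h4 h5 h6) ?_
    intro i j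
    fin_cases i <;> fin_cases j <;> simp [graphT1, h1, h2, h3, h7, h8, h9, H.adj_comm y x,
      H.adj_comm z x, H.adj_comm z y, H.adj_comm d]
  by_cases ha : H.Adj a d <;> by_cases hb : H.Adj b d <;> by_cases hc : H.Adj c d
  · exact Or.inr (Or.inr ⟨d, a, c, b, ha.symm, hca.symm, hbc.symm, hb, hdc, hab.ne⟩)
  · exact Or.inr (Or.inr ⟨d, a, c, b, ha.symm, hca.symm, hbc.symm, hb, hdc, hab.ne⟩)
  · exact Or.inr (Or.inr ⟨d, a, b, c, ha.symm, hab, hbc, hc, hdb, hca.ne.symm⟩)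
  · exact Or.inr (Or.inl (t1 b c a hbc hab.symm hca hdb hdc hda hb hc ha))
  · exact Or.inr (Or.inr ⟨d, b, a, c, hb.symm, hab.symm, hca.symm, hc, hda, hbc.ne⟩)
  · exact Or.inr (Or.inl (t1 a c b hca.symm hab hbc.symm hda hdc hdb ha hc hb))
  · exact Or.inr (Or.inl (t1 a b c hab hca.symm hbc hda hdb hdc ha hb hc))
  · exact Or.inl (t0 a b c hab hca.symm hbc hda hdb hdc ha hb hc)

/-! ### Cuts of a minimal counterexample and of its one-vertex reductions -/

/-- The neighbourhood of `v` separates `v` from the remaining vertices, so it induces no member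
of `Ψ` as soon as there are remaining vertices. -/
theorem not_psi_neighborSet {Ψ : ∀ (W : Type), SimpleGraph W → Prop} {V : Type} [Fintype V]
    {G : SimpleGraph V} (hno : ¬ HasPsiCut Ψ G) {v : V} (hv : vdeg G v + 1 < Nat.card V) :
    ¬ Ψ _ (G.induce (G.neighborSet v)) := by
  intro h
  refine hno ⟨G.neighborSet v, ⟨{v}, (insert v (G.neighborSet v))ᶜ, by simp, ?_, by simp, ?_, ?_⟩, h⟩
  · rw [Set.nonempty_compl]
    intro hu
    have h1 := Set.ncard_insert_le v (G.neighborSet v)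
    rw [hu, Set.ncard_univ] at h1
    unfold vdeg at hv
    omega
  · ext x
    by_cases hx : x = v <;> simp [hx]
  · rintro x rfl y hy hxy
    exact hy (Or.inr hxy)

/-- Since `α ≤ 3`, a graph obtained by deleting one vertex of a minimal counterexample and having
at least three edges fewer still has positive quality, hence a `Ψ`-cut by minimality. -/
theorem hasPsiCut_of_card_edgeSet {Ψ : ∀ (W : Type), SimpleGraph W → Prop} {α β : ℝ}
    (hα : α ≤ 3) {V : Type} [Fintype V] {G : SimpleGraph V} (hG : MinCounterexample Ψ α β G)
    (hn : 5 ≤ Nat.card V) {v : V} (G' : SimpleGraph ({v}ᶜ : Set V))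
    (hcard : Nat.card G'.edgeSet + 3 ≤ Nat.card G.edgeSet) : HasPsiCut Ψ G' := by
  obtain ⟨-, hq, -, hmin⟩ := hG
  have h1 := Set.ncard_add_ncard_compl ({v} : Set V)
  rw [Set.ncard_singleton, ← Nat.card_coe_set_eq] at h1
  refine hmin _ G' (by omega) (by omega) ?_
  unfold quality at hq ⊢
  have h1' : (1 : ℝ) + Nat.card ({v}ᶜ : Set V) = Nat.card V := by exact_mod_cast h1
  have h2' : (Nat.card G'.edgeSet : ℝ) + 3 ≤ Nat.card G.edgeSet := by exact_mod_cast hcard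
  rw [← h1'] at hq
  linarith

/-- A cut of a supergraph of `G - v` is a cut of `G` when `v` has no neighbour on the side `L`:
`v` is put on the side `R`. -/
theorem isVertexCut_image_val {V : Type} {G : SimpleGraph V} {v : V}
    {G' : SimpleGraph ({v}ᶜ : Set V)} (hle : G.induce {v}ᶜ ≤ G') {M L R : Set ({v}ᶜ : Set V)}
    (hL : L.Nonempty) (hd : Disjoint L R) (hM : L ∪ R = Mᶜ)
    (hLR : ∀ x ∈ L, ∀ y ∈ R, ¬ G'.Adj x y) (hv : ∀ x ∈ L, ¬ G.Adj v x) :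
    IsVertexCut G (Subtype.val '' M) := by
  refine ⟨Subtype.val '' L, insert v (Subtype.val '' R), hL.image _, by simp, ?_, ?_, ?_⟩
  · rw [Set.disjoint_insert_right]
    refine ⟨?_, (Set.disjoint_image_iff Subtype.val_injective).2 hd⟩
    rintro ⟨x, -, hx⟩
    exact x.2 hx
  · ext x
    by_cases hx : x = v
    · simp [hx]
    · have := Set.ext_iff.1 hM ⟨x, hx⟩
      simpa [hx] using this
  · rintro _ ⟨x, hx, rfl⟩ y (rfl | ⟨y, hy, rfl⟩) hxy
    · exact hv x hx hxy.symm
    · exact hLR x hx y hy (hle hxy)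

/-- If `G` has no `Ψ`-cut, then a `Ψ`-cut of a supergraph of `G - v` must separate two neighbours
of `v`, since otherwise `v` could be added to one of its sides. -/
theorem exists_separated_neighbors {Ψ : ∀ (W : Type), SimpleGraph W → Prop}
    (hΨ : Ψ = ForestClass ∨ Ψ = BipartiteClass) {V : Type} {G : SimpleGraph V} {v : V}
    (hno : ¬ HasPsiCut Ψ G) {G' : SimpleGraph ({v}ᶜ : Set V)} (hle : G.induce {v}ᶜ ≤ G')
    (hcut : HasPsiCut Ψ G') :
    ∃ M L R : Set ({v}ᶜ : Set V), Disjoint L R ∧ L ∪ R = Mᶜ ∧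
      (∀ x ∈ L, ∀ y ∈ R, ¬ G'.Adj x y) ∧ Ψ M (G'.induce M) ∧
      ∃ x ∈ L, ∃ y ∈ R, G.Adj v x ∧ G.Adj v y := by
  obtain ⟨M, ⟨L, R, hL, hR, hd, hM, hLR⟩, hP⟩ := hcut
  refine ⟨M, L, R, hd, hM, hLR, hP, ?_⟩
  have hP' : Ψ _ (G.induce (Subtype.val '' M)) := by
    have hmem : ∀ x : (Subtype.val '' M : Set V), ∃ h : x.1 ∈ ({v}ᶜ : Set V), ⟨x.1, h⟩ ∈ M := by
      rintro ⟨_, x, hx, rfl⟩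
      exact ⟨x.2, hx⟩
    refine psi_of_injective_hom hΨ (H' := G'.induce M)
      ⟨fun x => ⟨⟨x.1, (hmem x).1⟩, (hmem x).2⟩, fun {x y} h => hle h⟩ ?_ hP
    intro x y h
    exact Subtype.ext (congrArg (fun z => z.1.1) h)
  by_contra hcon
  push Not at hcon
  -- If `v` has a neighbour in `L`, it has none in `R`, and the roles of `L` and `R` are exchanged.
  by_cases hx : ∃ x ∈ L, G.Adj v x
  · obtain ⟨x, hxL, hx⟩ := hx
    exact hno ⟨_, isVertexCut_image_val hle hR hd.symm (by rw [Set.union_comm]; exact hM)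
      (fun y hy z hz h => hLR z hz y hy h.symm) (fun y hy => hcon x hxL y hy hx), hP'⟩
  · push Not at hx
    exact hno ⟨_, isVertexCut_image_val hle hL hd hM hLR hx, hP'⟩

/-- No cut of `G - v` separates two vertices of a clique, so deleting a vertex `v` whose
neighbourhood is a clique would give a smaller counterexample. -/
theorem not_isClique_neighborSet {Ψ : ∀ (W : Type), SimpleGraph W → Prop}
    (hΨ : Ψ = ForestClass ∨ Ψ = BipartiteClass) {α β : ℝ}
    (hα : α ≤ 3) {V : Type} [Fintype V] {G : SimpleGraph V} (hG : MinCounterexample Ψ α β G)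
    (hn : 5 ≤ Nat.card V) {v : V} (hv : 3 ≤ vdeg G v) : ¬ G.IsClique (G.neighborSet v) := by
  intro hcl
  have hc := card_edgeSet_delete_vertex G v
  obtain ⟨M, L, R, hd, -, hLR, -, x, hx, y, hy, hvx, hvy⟩ :=
    exists_separated_neighbors hΨ hG.2.2.1 le_rfl
      (hasPsiCut_of_card_edgeSet hα hG hn (G.induce {v}ᶜ) (by omega))
  exact hLR x hx y hy (hcl hvx hvy fun h => hd.ne_of_mem hx hy (Subtype.ext h))

/-- Subdividing the edge `ac` of a forest by the vertex `v` gives a forest: if `(G - v) + ac`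
induces a forest on `M` and `a`, `c` are the only neighbours of `v` in `M`, then `G` induces a
forest on `M ∪ {v}`. -/
theorem isAcyclic_induce_insert {V : Type} {G : SimpleGraph V} {v : V} {M : Set ({v}ᶜ : Set V)}
    {a c : ({v}ᶜ : Set V)} (haM : a ∈ M) (hcM : c ∈ M) (hac : a ≠ c) (hnac : ¬ G.Adj a c)
    (hN : ∀ x ∈ M, G.Adj v x → x = a ∨ x = c)
    (hM : ((G.induce {v}ᶜ ⊔ edge a c).induce M).IsAcyclic) :
    (G.induce (insert v (Subtype.val '' M))).IsAcyclic := by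
  have hM' : ((G.induce {v}ᶜ).induce M ⊔ edge ⟨a, haM⟩ ⟨c, hcM⟩).IsAcyclic := by
    refine hM.anti ?_
    rintro x y (h | h)
    · exact Or.inl h
    · refine Or.inr ?_
      have h' := (edge_adj _ _ _ _).1 h
      refine (edge_adj _ _ _ _).2 ⟨?_, fun e => h'.2 (Subtype.ext e)⟩
      exact h'.1.imp (fun e => ⟨congrArg _ e.1, congrArg _ e.2⟩)
        (fun e => ⟨congrArg _ e.1, congrArg _ e.2⟩)
  rw [isAcyclic_sup_fromEdgeSet_iff] at hM'
  have hmem : ∀ x : ({⟨v, Or.inl rfl⟩}ᶜ : Set (insert v (Subtype.val '' M) : Set V)),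
      ∃ h : x.1.1 ∈ ({v}ᶜ : Set V), ⟨x.1.1, h⟩ ∈ M := by
    rintro ⟨⟨_, rfl | ⟨x, hx, rfl⟩⟩, hx'⟩
    · exact absurd rfl hx'
    · exact ⟨x.2, hx⟩
  let f : (G.induce (insert v (Subtype.val '' M))).induce {⟨v, Or.inl rfl⟩}ᶜ →g
      (G.induce {v}ᶜ).induce M :=
    ⟨fun x => ⟨⟨x.1.1, (hmem x).1⟩, (hmem x).2⟩, fun {x y} h => h⟩
  refine isAcyclic_of_unreachable_neighbors _ ⟨v, Or.inl rfl⟩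
    ⟨a, Or.inr ⟨a, haM, rfl⟩⟩ ⟨c, Or.inr ⟨c, hcM, rfl⟩⟩ ?_ ?_ ?_ (hM'.1.comap f ?_) ?_
  · exact fun h => a.2 (congrArg Subtype.val h)
  · exact fun h => c.2 (congrArg Subtype.val h)
  · rintro ⟨_, rfl | ⟨x, hx, rfl⟩⟩ h
    · exact absurd h (G.loopless.irrefl _)
    · rcases hN x hx h with rfl | rfl
      · exact Or.inl rfl
      · exact Or.inr rfl
  · intro x y h
    exact Subtype.ext (Subtype.ext (congrArg (fun z => z.1.1) h))
  · intro h
    rcases hM'.2 (h.map f) with h | h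
    · exact hac (congrArg Subtype.val h)
    · exact hnac h

/-- In order at least 6, if a degree-4 vertex `v` has neighbours forming a 4-cycle `abcd`, then `a`
and `c` are adjacent.
Otherwise `(G - v) + ac` has a `Ψ`-cut `M`, which can only separate `b` from `d`, so that `b`, `d`
are non-adjacent and `a, c ∈ M`. For forests, `M ∪ {v}` is then a forest cut of `G`; for bipartite
graphs, the neighbourhood of `v` itself is a bipartite cut. -/
theorem square_diagonal {Ψ : ∀ (W : Type), SimpleGraph W → Prop}
    (hΨ : Ψ = ForestClass ∨ Ψ = BipartiteClass) {α β : ℝ}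
    (hα : α ≤ 3) {V : Type} [Fintype V] {G : SimpleGraph V} (hG : MinCounterexample Ψ α β G)
    (hn : 6 ≤ Nat.card V) {v a b c d : V} (hv : vdeg G v = 4)
    (hN : G.neighborSet v = {a, b, c, d}) (hab : G.Adj a b) (hbc : G.Adj b c)
    (hcd : G.Adj c d) (hda : G.Adj d a) (hac : a ≠ c) : G.Adj a c := by
  by_contra hnac
  have hadj : ∀ x, G.Adj v x ↔ x = a ∨ x = b ∨ x = c ∨ x = d := by
    intro x
    rw [← mem_neighborSet, hN]; simp
  have hav : G.Adj v a := by simp [hadj]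
  have hbv : G.Adj v b := by simp [hadj]
  have hcv : G.Adj v c := by simp [hadj]
  have hdv : G.Adj v d := by simp [hadj]
  obtain ⟨a', rfl⟩ : ∃ a' : ({v}ᶜ : Set V), a'.1 = a := ⟨⟨a, hav.ne.symm⟩, rfl⟩
  obtain ⟨b', rfl⟩ : ∃ a' : ({v}ᶜ : Set V), a'.1 = b := ⟨⟨b, hbv.ne.symm⟩, rfl⟩
  obtain ⟨c', rfl⟩ : ∃ a' : ({v}ᶜ : Set V), a'.1 = c := ⟨⟨c, hcv.ne.symm⟩, rfl⟩
  obtain ⟨d', rfl⟩ : ∃ a' : ({v}ᶜ : Set V), a'.1 = d := ⟨⟨d, hdv.ne.symm⟩, rfl⟩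
  have hc := card_edgeSet_delete_vertex G v
  have hc' := card_edgeSet_sup_edge_le (G.induce {v}ᶜ) a' c'
  obtain ⟨M, L, R, hd, hM, hLR, hP, x, hx, y, hy, hvx, hvy⟩ :=
    exists_separated_neighbors hΨ hG.2.2.1 le_sup_left
      (hasPsiCut_of_card_edgeSet hα hG (by omega) (G.induce {v}ᶜ ⊔ edge a' c') (by omega))
  have hxy := hLR x hx y hy
  have hne := hd.ne_of_mem hx hy
  have hac' : a' ≠ c' := fun h => hac (congrArg _ h)
  have hG' : ∀ x y : ({v}ᶜ : Set V), (G.induce {v}ᶜ ⊔ edge a' c').Adj x y ↔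
      G.Adj x y ∨ (x = a' ∧ y = c' ∨ x = c' ∧ y = a') := by
    intro x y
    simp only [sup_adj, edge_adj, induce_adj]
    constructor
    · tauto
    · rintro (h | ⟨rfl, rfl⟩ | ⟨rfl, rfl⟩)
      · exact Or.inl h
      · exact Or.inr ⟨Or.inl ⟨rfl, rfl⟩, hac'⟩
      · exact Or.inr ⟨Or.inr ⟨rfl, rfl⟩, hac'.symm⟩
  simp only [hG', not_or] at hLR hxy
  rw [hadj] at hvx hvy
  simp only [← Subtype.ext_iff] at hvx hvy
  have hbd : (x = b' ∧ y = d') ∨ (x = d' ∧ y = b') := by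
    rcases hvx with rfl | rfl | rfl | rfl <;> rcases hvy with rfl | rfl | rfl | rfl <;>
      first
      | exact (hne rfl).elim
      | exact Or.inl ⟨rfl, rfl⟩
      | exact Or.inr ⟨rfl, rfl⟩
      | exact (hxy.2.1 ⟨rfl, rfl⟩).elim
      | exact (hxy.2.2 ⟨rfl, rfl⟩).elim
      | exact (hxy.1 (by assumption)).elim
      | exact (hxy.1 (G.adj_symm (by assumption))).elim
  have hnbd : ¬ G.Adj b' d' := by
    rcases hbd with ⟨rfl, rfl⟩ | ⟨rfl, rfl⟩
    · exact hxy.1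
    · exact fun h => hxy.1 h.symm
  rcases hΨ with rfl | rfl
  -- A vertex adjacent to both separated vertices `b` and `d` lies in the cut.
  · have hmid : ∀ z : ({v}ᶜ : Set V), G.Adj z b' → G.Adj z d' → z ∈ M := by
      intro z hzb hzd
      by_contra hz
      have hz' : z ∈ L ∪ R := by rw [hM]; exact hz
      rcases hbd with ⟨rfl, rfl⟩ | ⟨rfl, rfl⟩ <;> rcases hz' with hz' | hz'
      · exact (hLR _ hz' _ hy).1 hzd
      · exact (hLR _ hx _ hz').1 hzb.symm
      · exact (hLR _ hz' _ hy).1 hzb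
      · exact (hLR _ hx _ hz').1 hzd.symm
    have hxM : x ∉ M := by
      have : x ∈ L ∪ R := Or.inl hx
      rwa [hM] at this
    have hyM : y ∉ M := by
      have : y ∈ L ∪ R := Or.inr hy
      rwa [hM] at this
    have hbM : b' ∉ M ∧ d' ∉ M := by
      rcases hbd with ⟨rfl, rfl⟩ | ⟨rfl, rfl⟩
      exacts [⟨hxM, hyM⟩, ⟨hyM, hxM⟩]
    refine hG.2.2.1 ⟨insert v (Subtype.val '' M), ⟨Subtype.val '' L, Subtype.val '' R,
      ⟨_, x, hx, rfl⟩, ⟨_, y, hy, rfl⟩, (Set.disjoint_image_iff Subtype.val_injective).2 hd,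
      ?_, ?_⟩, isAcyclic_induce_insert (hmid a' hab hda.symm) (hmid c' hbc.symm hcd) hac' hnac ?_ hP⟩
    · ext z
      by_cases hz : z = v
      · simp [hz]
      · have := Set.ext_iff.1 hM ⟨z, hz⟩
        simpa [hz] using this
    · rintro _ ⟨z, hz, rfl⟩ _ ⟨w, hw, rfl⟩ h
      exact (hLR z hz w hw).1 h
    · intro z hz hvz
      rw [hadj] at hvz
      simp only [← Subtype.ext_iff] at hvz
      rcases hvz with rfl | rfl | rfl | rfl
      exacts [Or.inl rfl, absurd hz hbM.1, Or.inr rfl, absurd hz hbM.2]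
  · classical
    refine not_psi_neighborSet hG.2.2.1 (v := v) (by omega) ?_
    refine ⟨Coloring.mk (fun z => if z.1 = a' ∨ z.1 = c' then 0 else 1) ?_⟩
    rintro ⟨z, hz⟩ ⟨w, hw⟩ hzw
    rw [mem_neighborSet, hadj] at hz hw
    have hzw' : G.Adj z w := hzw
    have h1 := hab.ne
    have h2 := hbc.ne
    have h3 := hcd.ne
    have h4 := hda.ne
    rcases hz with rfl | rfl | rfl | rfl <;> rcases hw with rfl | rfl | rfl | rfl <;>
      first
      | exact (hzw'.ne rfl).elim
      | exact (hnac hzw').elim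
      | exact (hnac hzw'.symm).elim
      | exact (hnbd hzw').elim
      | exact (hnbd hzw'.symm).elim
      | simp [h2, h4, h1.symm, h3.symm]

/-! ### Degrees in a minimal counterexample -/

/-- The handshake lemma for a graph of minimum degree at least `k`. -/
theorem mul_card_le_two_mul_card_edgeSet {V : Type} [Fintype V] (G : SimpleGraph V) (k : ℕ)
    (h : ∀ v, k ≤ vdeg G v) : k * Nat.card V ≤ 2 * Nat.card G.edgeSet := by
  classical
  have h1 := G.sum_degrees_eq_twice_card_edges
  have h4 : ∀ v, vdeg G v = G.degree v := fun v => by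
    rw [vdeg, Set.ncard_eq_toFinset_card', ← card_neighborFinset_eq_degree]; rfl
  rw [Nat.card_eq_fintype_card, Nat.card_eq_fintype_card, card_edgeSet, ← h1, mul_comm]
  simpa using Finset.card_nsmul_le_sum Finset.univ (fun v => G.degree v) k (fun v _ => (h v).trans_eq (h4 v))

/-- in a minimal counterexample every vertex has degree at least 4, and
the neighborhood of any degree-4 vertex induces `T0` or `T1`. -/
theorem stmt11 (Ψ : ∀ (W : Type), SimpleGraph W → Prop)
    (hΨ : Ψ = ForestClass ∨ Ψ = BipartiteClass)
    (α β : ℝ) (hα1 : 2 < α) (hα2 : α ≤ 3) (hβ : 4 * α - β = 6)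
    {V : Type} [Fintype V] (G : SimpleGraph V) (hG : MinCounterexample Ψ α β G) :
    (∀ v : V, 4 ≤ vdeg G v) ∧
    (∀ v : V, vdeg G v = 4 →
      Nonempty ((G.induce (G.neighborSet v)) ≃g graphT0) ∨
      Nonempty ((G.induce (G.neighborSet v)) ≃g graphT1)) := by
  have hn4 := hG.1
  have hq : 0 < α * Nat.card V - Nat.card G.edgeSet - β := hG.2.1
  have hcyc : ∀ v, vdeg G v + 1 < Nat.card V → ¬ (G.induce (G.neighborSet v)).IsAcyclic :=
    fun v hv h => not_psi_neighborSet hG.2.2.1 hv (psi_of_isAcyclic hΨ h)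
  have hcard : ∀ v, Nat.card (G.neighborSet v) = vdeg G v := fun v => Nat.card_coe_set_eq _
  have hdeg3 : ∀ v, 3 ≤ vdeg G v := by
    intro v
    by_contra! hv
    refine hcyc v (by omega) (IsAcyclic.of_card_le_two ?_)
    rw [ENat.card_eq_coe_natCard, hcard]
    exact_mod_cast Nat.le_of_lt_succ hv
  have hn5 : 5 ≤ Nat.card V := by
    by_contra! hlt
    -- On four vertices, `q > 0` says that there are fewer than six edges.
    have h4 : Nat.card V = 4 := by omega
    have := mul_card_le_two_mul_card_edgeSet G 3 hdeg3
    have h6 : 6 ≤ Nat.card G.edgeSet := by omega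
    have h6' : (6 : ℝ) ≤ Nat.card G.edgeSet := by exact_mod_cast h6
    rw [h4] at hq
    push_cast at hq
    linarith
  have hdeg4 : ∀ v, 4 ≤ vdeg G v := by
    intro v
    by_contra! hlt
    have h3 : vdeg G v = 3 := le_antisymm (by omega) (hdeg3 v)
    -- A cycle in a neighbourhood of size three is a triangle filling the whole neighbourhood.
    refine not_isClique_neighborSet hΨ hα2 hG hn5 (hdeg3 v) ?_
    have hbig : ∀ s : Set (G.neighborSet v), 3 ≤ s.ncard → s = Set.univ := by
      intro s hs
      refine Set.eq_of_subset_of_ncard_le (Set.subset_univ _) ?_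
      rwa [Set.ncard_univ, hcard, h3]
    obtain ⟨a, b, c, hab, hbc, hca⟩ | ⟨a, b, c, d, hab, hbc, hcd, hda, hac, hbd⟩ :=
      exists_triangle_or_square _ (by rw [hcard]; omega) (hcyc v (by omega))
    · have hu := hbig {a, b, c} (by rw [Set.ncard_eq_three.2 ⟨a, b, c, hab.ne, hca.ne.symm, hbc.ne, rfl⟩])
      intro x hx y hy hxy
      have hx' : (⟨x, hx⟩ : G.neighborSet v) ∈ ({a, b, c} : Set _) := hu ▸ Set.mem_univ _
      have hy' : (⟨y, hy⟩ : G.neighborSet v) ∈ ({a, b, c} : Set _) := hu ▸ Set.mem_univ _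
      simp only [Set.mem_insert_iff, Set.mem_singleton_iff] at hx' hy'
      change (G.induce (G.neighborSet v)).Adj ⟨x, hx⟩ ⟨y, hy⟩
      have hxy' : (⟨x, hx⟩ : G.neighborSet v) ≠ ⟨y, hy⟩ := fun h => hxy (congrArg Subtype.val h)
      generalize (⟨x, hx⟩ : G.neighborSet v) = x' at *
      generalize (⟨y, hy⟩ : G.neighborSet v) = y' at *
      rcases hx' with rfl | rfl | rfl <;> rcases hy' with rfl | rfl | rfl <;>
        first
        | exact (hxy' rfl).elim
        | assumption
        | exact adj_symm _ (by assumption)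
    · have h4 : ({a, b, c, d} : Set (G.neighborSet v)).ncard = 4 := by
        rw [Set.ncard_insert_of_notMem (by simp [hab.ne, hac, hda.ne.symm]),
          Set.ncard_eq_three.2 ⟨b, c, d, hbc.ne, hbd, hcd.ne, rfl⟩]
      have := Set.ncard_le_ncard (Set.subset_univ ({a, b, c, d} : Set (G.neighborSet v)))
      rw [Set.ncard_univ, hcard] at this
      omega
  refine ⟨hdeg4, fun v hv => ?_⟩
  have hn6 : 6 ≤ Nat.card V := by
    by_contra! hlt
    -- On five vertices, `q > 0` gives fewer than `α + 6 ≤ 9` edges, but minimum degree 4 forces ten.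
    have h5 : Nat.card V = 5 := by omega
    have := mul_card_le_two_mul_card_edgeSet G 4 hdeg4
    have h6 : 10 ≤ Nat.card G.edgeSet := by omega
    have h6' : (10 : ℝ) ≤ Nat.card G.edgeSet := by exact_mod_cast h6
    rw [h5] at hq
    push_cast at hq
    linarith
  obtain h | h | ⟨a, b, c, d, hab, hbc, hcd, hda, hac, hbd⟩ :=
    triangle_or_square_of_card_eq_four _ ((hcard v).trans hv) (hcyc v (by omega))
  · exact Or.inl h
  · exact Or.inr h
  exfalso
  have hN : G.neighborSet v = {a.1, b.1, c.1, d.1} := by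
    symm
    refine Set.eq_of_subset_of_ncard_le ?_ ?_
    · rintro x (rfl | rfl | rfl | rfl)
      exacts [a.2, b.2, c.2, d.2]
    · have h1 := hab.ne
      have h2 := hbc.ne
      have h3 := hcd.ne
      have h4 := hda.ne.symm
      simp only [ne_eq, Subtype.ext_iff] at h1 h2 h3 h4 hac hbd
      rw [Set.ncard_insert_of_notMem (by simp [h1, hac, h4]),
          Set.ncard_eq_three.2 ⟨b.1, c.1, d.1, h2, hbd, h3, rfl⟩]
      exact hv.le
  simp only [induce_adj] at hab hbc hcd hda
  -- Both diagonals of the square are present, so the neighbourhood is a clique.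
  have hac' := square_diagonal hΨ hα2 hG hn6 hv hN hab hbc hcd hda (fun h => hac (Subtype.ext h))
  have hbd' := square_diagonal hΨ hα2 hG hn6 hv (a := b) (b := c) (c := d) (d := a)
    (hN.trans (by ext; simp; tauto)) hbc hcd hda hab (fun h => hbd (Subtype.ext h))
  refine not_isClique_neighborSet hΨ hα2 hG hn5 (hdeg3 v) ?_
  rw [hN]
  rintro x (rfl | rfl | rfl | rfl) y (rfl | rfl | rfl | rfl) hxy <;>
    first
    | exact (hxy rfl).elim
    | assumption
    | exact G.adj_symm (by assumption)
end

section
/- Let Ψ be either the class of all forests or the class of all bipartite graphs, let α, β be reals with 2 < α ≤ 3 and 4α − β = 6, and let G be a minimal counterexample for Ψ, α, β. Then |V(G)| ≥ 7. -/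
/-!
The quality condition gives `|E(G)| ≤ 3n - 7` where `n = |V(G)|`, so for `4 ≤ n ≤ 6` the degree sum
is at most `6n - 14 < 4n` and some vertex `u` has degree at most three. It suffices
to consider cuts `M` for which a single vertex meets all edges of `G[M]`;
such an `M` induces a graph that is both a forest and bipartite, which treats the two classes at
once. Every set of at most two vertices, and every set of three vertices that is not a triangle, is
of this kind.

Applying this to the cut `N(u)` shows that, without such a cut, every vertex has degree at least
three and the neighbourhood of a vertex of degree three is a triangle
(`NoStarCut.three_le_degree`, `NoStarCut.adj_of_degree_le_three`). The rest is counting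
(`NoStarCut.not_small`).
* If `n = 4`, the degree sum is at most `10 < 3n`, a contradiction.
* If `n = 5`, write `N(u) = {a, b, c}` and let `x` be the remaining vertex. The six edges at `u`
  and inside the triangle, together with the at least three edges at `x`, exceed `3n - 7 = 8`.
* If `n = 6`, let `x, y` be the remaining vertices. Counting degrees forces `x` and `y` to be
  adjacent vertices of degree three. As `N(x)` and `N(y)` are triangles, `x` and `y` have the same
  neighbours in `{a, b, c}`. If one of `a, b, c` is not among these, the other two separate it and
  `u` from `{x, y}`, so all three are, and `x` has degree four.
-/

open SimpleGraph

/-! ### Star sets and star cuts -/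

/-- Some vertex `c` meets every edge of `G[M]`, that is, `G[M]` is a star with centre `c` plus
isolated vertices. The vertex `c` need not lie in `M`, in which case `M` is independent. -/
def IsStarSet {V : Type} (G : SimpleGraph V) (M : Set V) : Prop :=
  ∃ c, ∀ x ∈ M, ∀ y ∈ M, G.Adj x y → x = c ∨ y = c

/-- No vertex cut of `G` induces a star plus isolated vertices. -/
def NoStarCut {V : Type} (G : SimpleGraph V) : Prop :=
  ∀ M : Set V, IsVertexCut G M → ¬ IsStarSet G M

theorem IsStarSet.isAcyclic {V : Type} {G : SimpleGraph V} {M : Set V} (h : IsStarSet G M) :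
    (G.induce M).IsAcyclic := by
  obtain ⟨c, hc⟩ := h
  refine ((isAcyclic_starGraph c).induce M).anti ?_
  intro x y hxy
  have hxy' : G.Adj x y := hxy
  exact starGraph_adj.2 ⟨hxy'.ne, hc x x.2 y y.2 hxy'⟩

theorem IsStarSet.colorable_two {V : Type} {G : SimpleGraph V} {M : Set V} (h : IsStarSet G M) :
    (G.induce M).Colorable 2 := by
  classical
  obtain ⟨c, hc⟩ := h
  refine ⟨Coloring.mk (fun x => if (x : V) = c then 0 else 1) ?_⟩
  intro x y hxy
  have hxy' : G.Adj x y := hxy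
  have hne := hxy'.ne
  rcases hc x x.2 y y.2 hxy' with h | h
  · have : (y : V) ≠ c := fun h' => hne (h.trans h'.symm)
    simp [h, this]
  · have : (x : V) ≠ c := fun h' => hne (h'.trans h.symm)
    simp [h, this]

/-- The vertices `a`, `b`, `c` may coincide, so this covers all sets of at most two vertices. -/
theorem isStarSet_of_subset {V : Type} {G : SimpleGraph V} {M : Set V} {a b c : V}
    (hM : ∀ x ∈ M, x = a ∨ x = b ∨ x = c) (hab : ¬ G.Adj a b) : IsStarSet G M := by
  refine ⟨c, fun x hx y hy hxy => ?_⟩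
  have hba : ¬ G.Adj b a := fun h => hab h.symm
  rcases hM x hx with rfl | rfl | rfl <;> rcases hM y hy with rfl | rfl | rfl <;> simp_all

theorem isVertexCut_neighborFinset {V : Type} [Fintype V] [DecidableEq V] {G : SimpleGraph V}
    [DecidableRel G.Adj] {v : V} (h : G.degree v + 1 < Fintype.card V) :
    IsVertexCut G (G.neighborFinset v : Set V) := by
  refine ⟨{v}, {w | w ≠ v ∧ ¬ G.Adj v w}, ⟨v, rfl⟩, ?_, ?_, ?_, ?_⟩
  · by_contra hne
    have huniv : insert v (G.neighborFinset v) = Finset.univ := by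
      ext w
      simp only [Finset.mem_insert, mem_neighborFinset, Finset.mem_univ, iff_true]
      by_contra hw
      push Not at hw
      exact hne ⟨w, hw⟩
    have hcard := Finset.card_insert_le v (G.neighborFinset v)
    rw [huniv, Finset.card_univ, card_neighborFinset_eq_degree] at hcard
    omega
  · simp
  · ext w
    by_cases hw : w = v <;> simp [hw]
  · rintro x rfl y hy
    exact hy.2

theorem NoStarCut.three_le_degree {V : Type} [Fintype V] [DecidableEq V] {G : SimpleGraph V}
    [DecidableRel G.Adj] (hG : NoStarCut G) (hV : 4 ≤ Fintype.card V) (v : V) :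
    3 ≤ G.degree v := by
  by_contra hlt
  refine hG _ (isVertexCut_neighborFinset (v := v) (by omega)) ?_
  have hle : (G.neighborFinset v).card ≤ 2 := by
    rw [card_neighborFinset_eq_degree]; omega
  rcases Nat.lt_or_ge (G.neighborFinset v).card 2 with h1 | h2
  · refine ⟨v, fun x hx y hy hxy => ?_⟩
    exact absurd (Finset.card_le_one.1 (by omega) x hx y hy) hxy.ne
  · obtain ⟨a, b, -, hab⟩ := Finset.card_eq_two.1 (le_antisymm hle h2)
    refine isStarSet_of_subset (a := a) (b := a) (c := b) (fun x hx => ?_) (G.loopless.irrefl a)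
    rw [hab] at hx
    simp at hx
    tauto

/-- If `a`, `b` were nonadjacent, then `N(v)` would be a cut contained in some `{a, b, c}`. -/
theorem NoStarCut.adj_of_degree_le_three {V : Type} [Fintype V] [DecidableEq V]
    {G : SimpleGraph V} [DecidableRel G.Adj] (hG : NoStarCut G) (hV : 5 ≤ Fintype.card V) {v : V}
    (hv : G.degree v ≤ 3) {a b : V} (ha : G.Adj v a) (hb : G.Adj v b) (hab : a ≠ b) :
    G.Adj a b := by
  by_contra hn
  refine hG _ (isVertexCut_neighborFinset (v := v) (by omega)) ?_
  have hsub : {a, b} ⊆ G.neighborFinset v := by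
    intro x hx
    simp only [Finset.mem_insert, Finset.mem_singleton] at hx
    rcases hx with rfl | rfl <;> simpa
  have hrest : (G.neighborFinset v \ {a, b}).card ≤ 1 := by
    rw [Finset.card_sdiff_of_subset hsub, Finset.card_pair hab, card_neighborFinset_eq_degree]
    omega
  obtain ⟨c, hc⟩ : ∃ c, ∀ x ∈ G.neighborFinset v \ {a, b}, x = c := by
    rcases (G.neighborFinset v \ {a, b}).eq_empty_or_nonempty with h | ⟨c, hc⟩
    · exact ⟨a, by simp [h]⟩
    · exact ⟨c, fun x hx => Finset.card_le_one.1 hrest x hx c hc⟩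
  refine isStarSet_of_subset (a := a) (b := b) (c := c) (fun x hx => ?_) hn
  have := hc x
  simp only [Finset.mem_sdiff, Finset.mem_insert, Finset.mem_singleton] at this
  by_cases h1 : x = a
  · exact Or.inl h1
  · by_cases h2 : x = b
    · exact Or.inr (Or.inl h2)
    · exact Or.inr (Or.inr (this ⟨hx, by tauto⟩))

/-! ### Counting edges in graphs with at most six vertices -/

theorem degree_eq_sum_ite {V : Type} [Fintype V] [DecidableEq V] (G : SimpleGraph V)
    [DecidableRel G.Adj] (v : V) : G.degree v = ∑ w, if G.Adj v w then 1 else 0 := by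
  rw [← card_neighborFinset_eq_degree, neighborFinset_eq_filter, Finset.card_filter]

/-- With at most six vertices, at least `3n - 6` edges are needed to avoid star cuts. -/
theorem NoStarCut.not_small {V : Type} [Fintype V] [DecidableEq V] {G : SimpleGraph V}
    [DecidableRel G.Adj] (hG : NoStarCut G) (h4 : 4 ≤ Fintype.card V) (h6 : Fintype.card V ≤ 6)
    (hE : G.edgeFinset.card + 7 ≤ 3 * Fintype.card V) : False := by
  have hdeg := hG.three_le_degree h4
  have hsum := G.sum_degrees_eq_twice_card_edges
  have hlow : 3 * Fintype.card V ≤ ∑ v, G.degree v := by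
    calc 3 * Fintype.card V = ∑ _v : V, 3 := by simp [mul_comm]
      _ ≤ _ := Finset.sum_le_sum fun v _ => hdeg v
  have h5 : 5 ≤ Fintype.card V := by omega
  obtain ⟨u, hu⟩ : ∃ u, G.degree u ≤ 3 := by
    by_contra! hne
    have : 4 * Fintype.card V ≤ ∑ v, G.degree v := by
      calc 4 * Fintype.card V = ∑ _v : V, 4 := by simp [mul_comm]
        _ ≤ _ := Finset.sum_le_sum fun v _ => hne v
    omega
  have hu3 : (G.neighborFinset u).card = 3 := by
    rw [card_neighborFinset_eq_degree]; exact le_antisymm hu (hdeg u)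
  obtain ⟨a, b, c, hab, hac, hbc, hN⟩ := Finset.card_eq_three.1 hu3
  have hmem : ∀ w, G.Adj u w ↔ w = a ∨ w = b ∨ w = c := by
    intro w
    rw [← mem_neighborFinset, hN]
    simp
  have hua : G.Adj u a := (hmem a).2 (by simp)
  have hub : G.Adj u b := (hmem b).2 (by simp)
  have huc : G.Adj u c := (hmem c).2 (by simp)
  have hAab := hG.adj_of_degree_le_three h5 hu hua hub hab
  have hAac := hG.adj_of_degree_le_three h5 hu hua huc hac
  have hAbc := hG.adj_of_degree_le_three h5 hu hub huc hbc
  have hune := hua.ne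
  have hune' := hub.ne
  have hune'' := huc.ne
  set T : Finset V := {u, a, b, c} with hT
  have hTcard : T.card = 4 := by
    simp [*]
  have hTc : Tᶜ.card = Fintype.card V - 4 := by
    rw [Finset.card_compl, hTcard]
  have hsplit : ∀ f : V → ℕ, ∑ v, f v = f u + f a + f b + f c + ∑ v ∈ Tᶜ, f v := by
    intro f
    rw [← Finset.sum_add_sum_compl T f]
    simp [hT, hune, hune', hune'', hab, hac, hbc, add_assoc]
  rcases (by omega : Fintype.card V = 5 ∨ Fintype.card V = 6) with hn | hn
  · obtain ⟨x, hx⟩ := Finset.card_eq_one.1 (hTc.trans (by omega : _ = 1))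
    have hxT : x ∉ T := Finset.mem_compl.1 (by simp [hx])
    simp only [hT, Finset.mem_insert, Finset.mem_singleton, not_or] at hxT
    simp only [hx, Finset.sum_singleton] at hsplit
    have hux : ¬ G.Adj u x := by rw [hmem]; tauto
    have hdx := hdeg x
    rw [hsplit, degree_eq_sum_ite G u, degree_eq_sum_ite G a, degree_eq_sum_ite G b,
      degree_eq_sum_ite G c, degree_eq_sum_ite G x] at hsum
    rw [degree_eq_sum_ite] at hdx
    simp only [hsplit, hua, hub, huc, hAab, hAac, hAbc, hux, hua.symm, hub.symm, huc.symm,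
      hAab.symm, hAac.symm, hAbc.symm, SimpleGraph.irrefl, G.adj_comm x, if_true, if_false]
      at hsum hdx
    omega
  · obtain ⟨x, y, hxy, hX⟩ := Finset.card_eq_two.1 (hTc.trans (by omega : _ = 2))
    have hxT : x ∉ T := Finset.mem_compl.1 (by simp [hX])
    have hyT : y ∉ T := Finset.mem_compl.1 (by simp [hX])
    have hall : ∀ v, v = u ∨ v = a ∨ v = b ∨ v = c ∨ v = x ∨ v = y := by
      intro v
      by_cases hv : v ∈ T
      · simp only [hT, Finset.mem_insert, Finset.mem_singleton] at hv
        tauto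
      · rw [← Finset.mem_compl, hX, Finset.mem_insert, Finset.mem_singleton] at hv
        tauto
    simp only [hT, Finset.mem_insert, Finset.mem_singleton, not_or] at hxT hyT
    simp only [hX, Finset.sum_pair hxy] at hsplit
    have hux : ¬ G.Adj u x := by rw [hmem]; tauto
    have huy : ¬ G.Adj u y := by rw [hmem]; tauto
    have hdx := hdeg x
    have hdy := hdeg y
    have hxtri := fun h => @NoStarCut.adj_of_degree_le_three _ _ _ _ _ hG h5 x h
    have hytri := fun h => @NoStarCut.adj_of_degree_le_three _ _ _ _ _ hG h5 y h
    rw [hsplit, degree_eq_sum_ite G u, degree_eq_sum_ite G a, degree_eq_sum_ite G b,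
      degree_eq_sum_ite G c, degree_eq_sum_ite G x, degree_eq_sum_ite G y] at hsum
    rw [degree_eq_sum_ite] at hdx hdy hxtri hytri
    simp only [hsplit, hua, hub, huc, hAab, hAac, hAbc, hux, huy, hua.symm, hub.symm, huc.symm,
      hAab.symm, hAac.symm, hAbc.symm, SimpleGraph.irrefl, G.adj_comm x, G.adj_comm y u,
      G.adj_comm y a, G.adj_comm y b, G.adj_comm y c, if_true, if_false]
      at hsum hdx hdy hxtri hytri
    have hyx : G.Adj y x := by
      by_contra h
      simp only [h, if_false] at hsum hdx hdy
      omega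
    simp only [hyx, if_true] at hsum hdx hdy hxtri hytri
    -- `x` and `y` have the same neighbours among `a`, `b`, `c`
    have hiff : ∀ w, w ≠ x → w ≠ y → (G.Adj w x ↔ G.Adj w y) := by
      intro w hwx hwy
      constructor
      · intro h
        exact hxtri (by omega) h hyx hwy
      · intro h
        exact hytri (by omega) h.symm hyx hwx
    -- otherwise `{p, q}` separates `{u, r}` from `{x, y}`
    have hcut : ∀ p q r, (∀ v, v = u ∨ v = p ∨ v = q ∨ v = r ∨ v = x ∨ v = y) →
        r ≠ x → r ≠ y → G.Adj r x := by
      intro p q r hv hrx hry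
      by_contra hr
      have hr' : ¬ G.Adj r y := fun h => hr ((hiff r hrx hry).2 h)
      refine hG ({u, r} ∪ {x, y})ᶜ ⟨{u, r}, {x, y}, ⟨u, by simp⟩, ⟨x, by simp⟩, ?_,
        (compl_compl _).symm, ?_⟩ (isStarSet_of_subset (a := p) (b := p) (c := q) ?_
          (G.loopless.irrefl p))
      · rw [Set.disjoint_left]
        rintro v (rfl | rfl) (h | h)
        · exact hxT.1 h.symm
        · exact hyT.1 h.symm
        · exact hrx h
        · exact hry h
      · rintro v (rfl | rfl) w (rfl | rfl) <;> assumption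
      · intro v hvM
        simp only [Set.mem_compl_iff, Set.mem_union, Set.mem_insert_iff, Set.mem_singleton_iff]
          at hvM
        push Not at hvM
        rcases hv v with h | h | h | h | h | h
        · exact absurd h hvM.1.1
        · exact Or.inl h
        · exact Or.inr (Or.inr h)
        · exact absurd h hvM.1.2
        · exact absurd h hvM.2.1
        · exact absurd h hvM.2.2
    have hax := hcut b c a (fun v => by grind only [hall v]) (Ne.symm hxT.2.1) (Ne.symm hyT.2.1)
    have hbx := hcut a c b (fun v => by grind only [hall v]) (Ne.symm hxT.2.2.1)
      (Ne.symm hyT.2.2.1)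
    have hcx := hcut a b c hall (Ne.symm hxT.2.2.2) (Ne.symm hyT.2.2.2)
    have hay := (hiff a (Ne.symm hxT.2.1) (Ne.symm hyT.2.1)).1 hax
    have hby := (hiff b (Ne.symm hxT.2.2.1) (Ne.symm hyT.2.2.1)).1 hbx
    have hcy := (hiff c (Ne.symm hxT.2.2.2) (Ne.symm hyT.2.2.2)).1 hcx
    simp only [hax, hbx, hcx, hay, hby, hcy, if_true] at hsum
    omega

/-- a minimal counterexample has at least 7 vertices. -/
theorem stmt12 (Ψ : ∀ (W : Type), SimpleGraph W → Prop)
    (hΨ : Ψ = ForestClass ∨ Ψ = BipartiteClass)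
    (α β : ℝ) (hα1 : 2 < α) (hα2 : α ≤ 3) (hβ : 4 * α - β = 6)
    {V : Type} [Fintype V] (G : SimpleGraph V) (hG : MinCounterexample Ψ α β G) :
    7 ≤ Nat.card V := by
  classical
  obtain ⟨h4, hq, hcut, -⟩ := hG
  have hno : NoStarCut G := by
    intro M hM hstar
    refine hcut ⟨M, hM, ?_⟩
    rcases hΨ with rfl | rfl
    · exact hstar.isAcyclic
    · exact hstar.colorable_two
  by_contra hlt
  rw [Nat.card_eq_fintype_card] at h4 hlt
  refine hno.not_small h4 (by omega) ?_
  unfold quality at hq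
  rw [Nat.card_eq_fintype_card, Nat.card_eq_fintype_card, ← edgeFinset_card] at hq
  -- `|E| < 6 + (n - 4) α ≤ 6 + 3 (n - 4)`
  have h4' : (4 : ℝ) ≤ Fintype.card V := by exact_mod_cast h4
  have hlt' : (G.edgeFinset.card : ℝ) + 6 < 3 * Fintype.card V := by nlinarith
  have : G.edgeFinset.card + 6 < 3 * Fintype.card V := by exact_mod_cast hlt'
  omega
end

section
/- Let α, β be reals with 2 < α ≤ 3 and 4α − β = 6, let G be a minimal counterexample for the class 𝔅 of bipartite graphs and parameters α, β, and let U be the set of vertices of G of degree exactly 4. Then the induced subgraph G[U] has maximum degree at most 1, i.e., every vertex of degree 4 in G has at most one neighbor of degree 4. -/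
/-!
Suppose a vertex `v` of degree `4` has two neighbours of degree `4`. If `G` has only the five
vertices of the closed neighbourhood of `v`, these three vertices of degree `4` account for nine
edges, whereas positive quality means `|E| < α (|V| - 4) + 6 ≤ 9` (`exists_outside`).

Otherwise there are two sources of constraints. First, the outer neighbourhood of a small set never
induces a bipartite graph, as it would be a bipartite cut (`no_local`). So `N(v)` contains a
triangle (`exists_triangle`). Second, as `α ≤ 3`, deleting a set `S` of vertices that meets at least
`3|S| + k` edges and adding `k` new edges keeps the quality positive, so by minimality the reduced
graph has a bipartite cut (`exists_reduced_state`). A cut never separates a clique, and when the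
neighbours of `S` are tied together by enough edges the cut extends to `G`, a contradiction
(`no_extension`). With `S = {v}` this shows that `N(v)` has no diamond (`no_diamond`): writing
`N(v) = {a, b, c, d}` with `abc` a triangle, `d` is adjacent to at most one of `a`, `b`, `c`.

* If two neighbours `a`, `b` of degree `4` lie in the triangle (`no_case_clique`), let `d`, `x`, `y`
  be the fourth neighbours of `v`, `a`, `b`. The outer neighbourhoods of the three pairs in
  `{v, a, b}` make `{c, d, x, y}` a clique. The set `{v, a, b}` meets nine edges, and a cut of
  `G - {v, a, b}` does not separate that clique, so it extends to `G`.
* If only `a` lies in the triangle and `d` also has degree `4` (`no_case_pendant`), let `x` be the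
  fourth neighbour of `a`. The outer neighbourhood `{b, c, d, x}` of `{v, a}` makes `bdx` a
  triangle, up to exchanging `b` and `c`. Then `N(d) = {v, b, x, s}` with `bxs` a triangle. The set
  `{v, a, d}` meets ten edges, which leaves room for the new edge `cx`. The cut of the reduced graph
  again extends to `G` (`no_case_pendant_aux`).
-/

open SimpleGraph

/-! ### Cuts as vertex states -/

/-- Compatibility of vertex states along an edge. State `0` is the side `L`, state `1` is the
side `R`, and states `2`, `3` are the two colour classes of the cut `M`. A bipartite cut is the
same thing as a compatible assignment of states in which both `0` and `1` occur. -/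
def okState (i j : Fin 4) : Bool :=
  match i, j with
  | 0, 1 => false
  | 1, 0 => false
  | 2, 2 => false
  | 3, 3 => false
  | _, _ => true

/-- The neighbourhood of `v` consists exactly of the distinct vertices `a`, `b`, `c`, `d`. -/
def Nbrs {V : Type} (G : SimpleGraph V) (v a b c d : V) : Prop :=
  (a ≠ b ∧ a ≠ c ∧ a ≠ d ∧ b ≠ c ∧ b ≠ d ∧ c ≠ d) ∧
  ∀ z, G.Adj v z ↔ z = a ∨ z = b ∨ z = c ∨ z = d

theorem no_state {V : Type} {G : SimpleGraph V} (h : ¬ HasPsiCut BipartiteClass G)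
    (σ : V → Fin 4) (h0 : ∃ u, σ u = 0) (h1 : ∃ u, σ u = 1)
    (hσ : ∀ u w, G.Adj u w → okState (σ u) (σ w) = true) : False := by
  apply h
  refine ⟨{z | σ z ≠ 0 ∧ σ z ≠ 1}, ⟨{z | σ z = 0}, {z | σ z = 1}, h0, h1, ?_, ?_, ?_⟩, ?_⟩
  · rw [Set.disjoint_left]
    intro z hz hz'
    simp only [Set.mem_ofPred_eq] at hz hz'
    rw [hz] at hz'
    exact absurd hz' (by decide)
  · ext z
    simp only [Set.mem_union, Set.mem_ofPred_eq, Set.mem_compl_iff]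
    tauto
  · intro x hx y hy hxy
    have := hσ x y hxy
    simp only [Set.mem_ofPred_eq] at hx hy
    rw [hx, hy] at this
    exact absurd this (by decide)
  · refine ⟨SimpleGraph.Coloring.mk (fun z => if σ z = 2 then (0 : Fin 2) else 1) ?_⟩
    rintro ⟨x, hx⟩ ⟨y, hy⟩ hxy
    have := hσ x y hxy
    simp only [Set.mem_ofPred_eq] at hx hy
    show (if σ x = 2 then (0 : Fin 2) else 1) ≠ (if σ y = 2 then (0 : Fin 2) else 1)
    have key : ∀ i j : Fin 4, (i ≠ 0 ∧ i ≠ 1) → (j ≠ 0 ∧ j ≠ 1) → okState i j = true →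
        (if i = 2 then (0 : Fin 2) else 1) ≠ (if j = 2 then (0 : Fin 2) else 1) := by
      decide
    exact key _ _ hx hy this

/-- A set `S` whose outside neighbours are covered by two independent sets `P`, `Q` reaches
every vertex outside `P` and `Q`, since otherwise `P ∪ Q` would be a bipartite cut. -/
theorem no_local {V : Type} {G : SimpleGraph V} (h : ¬ HasPsiCut BipartiteClass G)
    (S P Q : Set V) (s z : V) (hs : s ∈ S)
    (hN : ∀ u ∈ S, ∀ w, G.Adj u w → w ∈ S ∨ w ∈ P ∨ w ∈ Q)
    (hP : ∀ u ∈ P, ∀ w ∈ P, ¬ G.Adj u w) (hQ : ∀ u ∈ Q, ∀ w ∈ Q, ¬ G.Adj u w)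
    (hz : z ∉ S) (hzP : z ∉ P) (hzQ : z ∉ Q) : False := by
  classical
  apply no_state h
    (fun u => if u ∈ S then 0 else if u ∈ P then 2 else if u ∈ Q then 3 else 1)
    ⟨s, by simp [hs]⟩ ⟨z, by simp [hz, hzP, hzQ]⟩
  intro u w huw
  have h1 := hN u
  have h2 := hN w
  have h3 := hP u
  have h4 := hQ u
  have h5 := huw.symm
  split_ifs <;> first | rfl | (exfalso; grind)

/-! ### Reduction and extension of cuts -/

/-- Minimality, in the form used throughout. Delete the vertices of `S`, which meet all edges in
`T`, and add the edges in `F`: since `α ≤ 3` the quality does not drop, so the reduced graph has a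
bipartite cut, given as states off `S`. The set `B` only witnesses that at least four vertices
remain. -/
theorem exists_reduced_state {α β : ℝ} (hα : α ≤ 3)
    {V : Type} [Fintype V] {G : SimpleGraph V} (hG : MinCounterexample BipartiteClass α β G)
    (S : Finset V) (T F : Finset (Sym2 V)) (B : Finset V) (hS : S.Nonempty)
    (hB : 4 ≤ B.card) (hBS : ∀ z ∈ B, z ∉ S)
    (hT : ∀ e ∈ T, e ∈ G.edgeSet ∧ ∃ z ∈ S, z ∈ e)
    (hc : 3 * S.card + F.card ≤ T.card) :
    ∃ σ : V → Fin 4, (∃ u, u ∉ S ∧ σ u = 0) ∧ (∃ u, u ∉ S ∧ σ u = 1) ∧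
      ∀ u w, u ∉ S → w ∉ S → u ≠ w → G.Adj u w ∨ s(u, w) ∈ F →
        okState (σ u) (σ w) = true := by
  classical
  obtain ⟨-, hq, -, hmin⟩ := hG
  set H : SimpleGraph {z : V // z ∉ S} :=
    (G ⊔ SimpleGraph.fromEdgeSet (F : Set (Sym2 V))).comap Subtype.val with hH
  have hadj : ∀ x y : {z : V // z ∉ S}, H.Adj x y ↔
      (G.Adj x y ∨ (s((x : V), (y : V)) ∈ F ∧ (x : V) ≠ y)) := by
    intro x y; simp [hH]
  have hcardW : Nat.card {z : V // z ∉ S} + S.card = Nat.card V := by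
    rw [Nat.card_eq_fintype_card, Nat.card_eq_fintype_card, Fintype.card_subtype_compl]
    have : Fintype.card {x // x ∈ S} = S.card := by simp
    have := Finset.card_le_univ S
    omega
  have hSpos := hS.card_pos
  have h4 : 4 ≤ Nat.card {z : V // z ∉ S} := by
    rw [Nat.card_eq_fintype_card, Fintype.card_subtype]
    refine hB.trans (Finset.card_le_card ?_)
    intro z hz
    simpa using hBS z hz
  have hE : Nat.card H.edgeSet + T.card ≤ Nat.card G.edgeSet + F.card := by
    have hGc : Nat.card G.edgeSet = G.edgeFinset.card := by
      rw [Nat.card_eq_fintype_card, SimpleGraph.edgeFinset_card]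
    have hHc : Nat.card H.edgeSet = H.edgeFinset.card := by
      rw [Nat.card_eq_fintype_card, SimpleGraph.edgeFinset_card]
    have hinj : Function.Injective (Sym2.map (Subtype.val : {z : V // z ∉ S} → V)) :=
      Sym2.map.injective Subtype.val_injective
    have himg : (H.edgeFinset.image (Sym2.map Subtype.val)) ⊆ (G.edgeFinset \ T) ∪ F := by
      intro e he
      obtain ⟨e', he', rfl⟩ := Finset.mem_image.1 he
      induction e' using Sym2.ind with
      | _ x y =>
        rw [SimpleGraph.mem_edgeFinset, SimpleGraph.mem_edgeSet, hadj] at he'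
        rw [Sym2.map_mk]
        simp only [Finset.mem_union, Finset.mem_sdiff, SimpleGraph.mem_edgeFinset,
          SimpleGraph.mem_edgeSet]
        rcases he' with he' | he'
        · left
          refine ⟨he', fun hm => ?_⟩
          obtain ⟨-, z, hz, hz'⟩ := hT _ hm
          rcases Sym2.mem_iff.1 hz' with rfl | rfl
          · exact x.2 hz
          · exact y.2 hz
        · exact Or.inr he'.1
    have h1 := Finset.card_le_card himg
    rw [Finset.card_image_of_injective _ hinj] at h1
    have h2 := Finset.card_union_le (G.edgeFinset \ T) F
    have hTG : T ⊆ G.edgeFinset := fun e he => by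
      rw [SimpleGraph.mem_edgeFinset]; exact (hT e he).1
    have h3 := Finset.card_sdiff_add_card_eq_card hTG
    omega
  have hqH : 0 < quality α β H := by
    unfold quality at hq ⊢
    have e1 : (Nat.card {z : V // z ∉ S} : ℝ) + S.card = Nat.card V := by exact_mod_cast hcardW
    have e2 : (Nat.card H.edgeSet : ℝ) + T.card ≤ Nat.card G.edgeSet + F.card := by
      exact_mod_cast hE
    have e3 : 3 * (S.card : ℝ) + F.card ≤ T.card := by exact_mod_cast hc
    have e4 : α * S.card ≤ 3 * S.card := by gcongr
    rw [← e1] at hq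
    linarith
  obtain ⟨M, ⟨L, R, ⟨l, hl⟩, ⟨r, hr⟩, hLR, hM, hno⟩, ⟨col⟩⟩ := hmin _ H h4 (by omega) hqH
  have hLR' : ∀ z, z ∈ L → z ∉ R := fun z hz hz' => Set.disjoint_left.1 hLR hz hz'
  have hM' : ∀ z, z ∈ M ↔ ¬ (z ∈ L ∨ z ∈ R) := by
    intro z
    rw [← Set.mem_union, hM]; simp
  let τ : {z : V // z ∉ S} → Fin 4 := fun z =>
    if hz : z ∈ M then (if col ⟨z, hz⟩ = 0 then 2 else 3) else if z ∈ L then 0 else 1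
  have hτ : ∀ x y, H.Adj x y → okState (τ x) (τ y) = true := by
    intro x y hxy
    by_cases hx : x ∈ M <;> by_cases hy : y ∈ M
    · have hcol : col ⟨x, hx⟩ ≠ col ⟨y, hy⟩ := col.valid hxy
      simp only [τ, hx, hy, dif_pos]
      generalize col ⟨x, hx⟩ = i at *
      generalize col ⟨y, hy⟩ = j at *
      revert i j
      decide
    · simp only [τ, hx, hy, dif_pos, dif_neg, not_false_eq_true]
      split_ifs <;> rfl
    · simp only [τ, hx, hy, dif_pos, dif_neg, not_false_eq_true]
      split_ifs <;> rfl
    · have h1 := hno x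
      have h2 := hno y
      have h3 := hxy.symm
      simp only [τ, hx, hy, dif_neg, not_false_eq_true]
      rw [hM'] at hx hy
      split_ifs <;> first | rfl | (exfalso; grind)
  refine ⟨fun z => if hz : z ∉ S then τ ⟨z, hz⟩ else 0, ⟨l, l.2, ?_⟩, ⟨r, r.2, ?_⟩, ?_⟩
  · have : l ∉ M := by rw [hM']; tauto
    simp [l.2, τ, this, hl]
  · have h1 : r ∉ M := by rw [hM']; tauto
    have h2 : r ∉ L := fun h => hLR' _ h hr
    simp [r.2, τ, h1, h2]
  · intro u w hu hw hne huw
    simp only [hu, hw, not_false_eq_true, dif_pos]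
    apply hτ
    rw [hadj]
    tauto

/-- A cut of `G - S` cannot be extended to a cut of `G` by choosing states for the vertices
of `S`. -/
theorem no_extension {V : Type} {G : SimpleGraph V} (h : ¬ HasPsiCut BipartiteClass G)
    {S : Finset V} {σ : V → Fin 4} (τ : V → Fin 4)
    (h0 : ∃ u, u ∉ S ∧ σ u = 0) (h1 : ∃ u, u ∉ S ∧ σ u = 1)
    (hσ : ∀ u w, u ∉ S → w ∉ S → G.Adj u w → okState (σ u) (σ w) = true)
    (hτ : ∀ u, u ∉ S → τ u = σ u)
    (hS : ∀ u ∈ S, ∀ w, G.Adj u w → okState (τ u) (τ w) = true) : False := by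
  have hsymm : ∀ i j, okState i j = okState j i := by decide
  obtain ⟨u0, hu0, h0⟩ := h0
  obtain ⟨u1, hu1, h1⟩ := h1
  refine no_state h τ ⟨u0, by rw [hτ _ hu0, h0]⟩ ⟨u1, by rw [hτ _ hu1, h1]⟩ ?_
  intro u w huw
  by_cases hu : u ∈ S
  · exact hS u hu w huw
  by_cases hw : w ∈ S
  · rw [hsymm]
    exact hS w hw u huw.symm
  rw [hτ u hu, hτ w hw]
  exact hσ u w hu hw huw

/-! ### Neighbourhoods of vertices of degree four -/

theorem nbrs_of_three {V : Type} [Fintype V] {G : SimpleGraph V} {v a b c : V}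
    (hv : vdeg G v = 4) (hab : a ≠ b) (hac : a ≠ c) (hbc : b ≠ c)
    (ha : G.Adj v a) (hb : G.Adj v b) (hc : G.Adj v c) : ∃ d, Nbrs G v a b c d := by
  classical
  unfold vdeg at hv
  obtain ⟨d, hd, hd'⟩ : ∃ d ∈ G.neighborSet v, d ∉ ({a, b, c} : Set V) := by
    refine Set.exists_mem_notMem_of_ncard_lt_ncard ?_ (Set.toFinite _)
    rw [hv, Set.ncard_eq_three.2 ⟨a, b, c, hab, hac, hbc, rfl⟩]
    norm_num
  simp only [Set.mem_insert_iff, Set.mem_singleton_iff, not_or] at hd'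
  refine ⟨d, ⟨hab, hac, Ne.symm hd'.1, hbc, Ne.symm hd'.2.1, Ne.symm hd'.2.2⟩, ?_⟩
  have hsub : ({a, b, c, d} : Set V) ⊆ G.neighborSet v := by
    intro z hz
    simp only [Set.mem_insert_iff, Set.mem_singleton_iff] at hz
    rcases hz with rfl | rfl | rfl | rfl <;> assumption
  have hcard : ({a, b, c, d} : Set V).ncard = 4 := by
    rw [Set.ncard_eq_toFinset_card']
    simp only [Set.toFinset_insert, Set.toFinset_singleton]
    rw [Finset.card_eq_of_equiv_fin]
    exact Fintype.equivFinOfCardEq (by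
      simp only [Fintype.card_coe]
      rw [Finset.card_insert_of_notMem, Finset.card_insert_of_notMem, Finset.card_pair] <;>
        grind)
  have heq := Set.eq_of_subset_of_ncard_le hsub (by rw [hv, hcard])
  intro z
  rw [← SimpleGraph.mem_neighborSet, ← heq]
  simp

theorem nbrs_of_two {V : Type} [Fintype V] {G : SimpleGraph V} {v a b : V}
    (hv : vdeg G v = 4) (hab : a ≠ b)
    (ha : G.Adj v a) (hb : G.Adj v b) : ∃ c d, Nbrs G v a b c d := by
  have hv' := hv
  unfold vdeg at hv
  obtain ⟨c, hc, hc'⟩ : ∃ c ∈ G.neighborSet v, c ∉ ({a, b} : Set V) := by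
    refine Set.exists_mem_notMem_of_ncard_lt_ncard ?_ (Set.toFinite _)
    rw [hv, Set.ncard_pair hab]
    norm_num
  simp only [Set.mem_insert_iff, Set.mem_singleton_iff, not_or] at hc'
  exact ⟨c, nbrs_of_three hv' hab (Ne.symm hc'.1) (Ne.symm hc'.2) ha hb hc⟩

/-- A degree-`4` vertex does not have a diamond in its neighbourhood: deleting it costs four edges
and leaves room for the edge completing the neighbourhood to a clique, which no cut separates. -/
theorem no_diamond {α β : ℝ} (hα : α ≤ 3)
    {V : Type} [Fintype V] {G : SimpleGraph V} (hG : MinCounterexample BipartiteClass α β G)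
    {v a b c d : V} (hN : Nbrs G v a b c d) (hab : G.Adj a b) (hac : G.Adj a c)
    (hbc : G.Adj b c) (hda : G.Adj d a) (hdb : G.Adj d b) : False := by
  classical
  obtain ⟨⟨n1, n2, n3, n4, n5, n6⟩, hN⟩ := hN
  have va : G.Adj v a := by simp [hN]
  have vb : G.Adj v b := by simp [hN]
  have vc : G.Adj v c := by simp [hN]
  have vd : G.Adj v d := by simp [hN]
  have na := va.ne
  have nb := vb.ne
  have nc := vc.ne
  have nd := vd.ne
  obtain ⟨σ, ⟨u0, hu0, h0⟩, ⟨u1, hu1, h1⟩, hσ⟩ := exists_reduced_state hα hG {v}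
    {s(v, a), s(v, b), s(v, c), s(v, d)} {s(c, d)} {a, b, c, d} (by simp)
    (by
      rw [Finset.card_insert_of_notMem, Finset.card_insert_of_notMem, Finset.card_pair] <;>
        grind)
    (by simp only [Finset.mem_insert, Finset.mem_singleton]; grind)
    (by
      simp only [Finset.mem_insert, Finset.mem_singleton]
      rintro e (rfl | rfl | rfl | rfl) <;> simp [*])
    (by
      rw [Finset.card_insert_of_notMem, Finset.card_insert_of_notMem, Finset.card_pair] <;>
        simp [*])
  simp only [Finset.mem_singleton] at hu0 hu1 hσ
  have key : ∀ i j k l : Fin 4, okState i j = true → okState i k = true → okState j k = true →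
      okState l i = true → okState l j = true → okState k l = true →
      ∃ m, okState m i = true ∧ okState m j = true ∧ okState m k = true ∧ okState m l = true := by
    decide
  obtain ⟨m, k1, k2, k3, k4⟩ := key (σ a) (σ b) (σ c) (σ d)
    (hσ a b na.symm nb.symm n1 (.inl hab)) (hσ a c na.symm nc.symm n2 (.inl hac))
    (hσ b c nb.symm nc.symm n4 (.inl hbc)) (hσ d a nd.symm na.symm n3.symm (.inl hda))
    (hσ d b nd.symm nb.symm n5.symm (.inl hdb)) (hσ c d nc.symm nd.symm n6 (.inr rfl))
  refine no_extension hG.2.2.1 (S := {v}) (fun z => if z = v then m else σ z)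
    ⟨u0, by simpa using hu0, h0⟩ ⟨u1, by simpa using hu1, h1⟩ ?_ ?_ ?_
  · intro u w hu hw huw
    simp only [Finset.mem_singleton] at hu hw
    exact hσ u w hu hw huw.ne (.inl huw)
  · intro z hz
    simp only [Finset.mem_singleton] at hz
    exact if_neg hz
  · intro z hz w hw
    rw [Finset.mem_singleton.1 hz, hN] at hw
    rw [Finset.mem_singleton.1 hz]
    rcases hw with rfl | rfl | rfl | rfl <;> simp [*, Ne.symm]

theorem nbrs_of_one {V : Type} [Fintype V] {G : SimpleGraph V} {v a : V}
    (hv : vdeg G v = 4) (ha : G.Adj v a) : ∃ b c d, Nbrs G v a b c d := by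
  have hv' := hv
  unfold vdeg at hv
  obtain ⟨b, hb, hb'⟩ : ∃ b ∈ G.neighborSet v, b ∉ ({a} : Set V) := by
    refine Set.exists_mem_notMem_of_ncard_lt_ncard ?_ (Set.toFinite _)
    rw [hv, Set.ncard_singleton]
    norm_num
  rw [Set.mem_singleton_iff] at hb'
  exact ⟨b, nbrs_of_two hv' (Ne.symm hb') ha hb⟩

/-- Some vertex `z` lies outside the closed neighbourhood of `v`, so `N(v)` is a cut and hence
induces a non-bipartite graph; on four vertices this means a triangle. -/
theorem exists_triangle {V : Type} {G : SimpleGraph V} (h : ¬ HasPsiCut BipartiteClass G)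
    {v p q r s z : V} (hN : Nbrs G v p q r s)
    (hz : z ≠ v ∧ z ≠ p ∧ z ≠ q ∧ z ≠ r ∧ z ≠ s) :
    (G.Adj p q ∧ G.Adj p r ∧ G.Adj q r) ∨ (G.Adj p q ∧ G.Adj p s ∧ G.Adj q s) ∨
    (G.Adj p r ∧ G.Adj p s ∧ G.Adj r s) ∨ (G.Adj q r ∧ G.Adj q s ∧ G.Adj r s) := by
  obtain ⟨-, hN⟩ := hN
  have key : ∀ P Q : Set V, (∀ w, w = p ∨ w = q ∨ w = r ∨ w = s → w ∈ P ∨ w ∈ Q) →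
      z ∉ P → z ∉ Q → (∀ u ∈ P, ∀ w ∈ P, ¬ G.Adj u w) →
      (∀ u ∈ Q, ∀ w ∈ Q, ¬ G.Adj u w) → False := by
    intro P Q hPQ hzP hzQ hP hQ
    refine no_local h {v} P Q v z rfl ?_ hP hQ hz.1 hzP hzQ
    rintro u rfl w hw
    exact .inr (hPQ w ((hN w).1 hw))
  have hirr : ∀ u w, G.Adj u w → u ≠ w := fun u w h => h.ne
  have hsy : ∀ u w, G.Adj u w → G.Adj w u := fun u w h => h.symm
  have k1 : ¬ (¬ G.Adj p q ∧ ¬ G.Adj r s) := fun h => key {p, q} {r, s}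
    (by grind) (by grind) (by grind) (by grind) (by grind)
  have k2 : ¬ (¬ G.Adj p r ∧ ¬ G.Adj q s) := fun h => key {p, r} {q, s}
    (by grind) (by grind) (by grind) (by grind) (by grind)
  have k3 : ¬ (¬ G.Adj p s ∧ ¬ G.Adj q r) := fun h => key {p, s} {q, r}
    (by grind) (by grind) (by grind) (by grind) (by grind)
  have k4 : ¬ (¬ G.Adj p q ∧ ¬ G.Adj p r ∧ ¬ G.Adj q r) := fun h => key {p, q, r} {s}
    (by grind) (by grind) (by grind) (by grind) (by grind)
  have k5 : ¬ (¬ G.Adj p q ∧ ¬ G.Adj p s ∧ ¬ G.Adj q s) := fun h => key {p, q, s} {r}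
    (by grind) (by grind) (by grind) (by grind) (by grind)
  have k6 : ¬ (¬ G.Adj p r ∧ ¬ G.Adj p s ∧ ¬ G.Adj r s) := fun h => key {p, r, s} {q}
    (by grind) (by grind) (by grind) (by grind) (by grind)
  have k7 : ¬ (¬ G.Adj q r ∧ ¬ G.Adj q s ∧ ¬ G.Adj r s) := fun h => key {q, r, s} {p}
    (by grind) (by grind) (by grind) (by grind) (by grind)
  clear key hirr hsy hN
  grind

/-! ### Two neighbours of degree four in a common triangle -/

/-- In a `K₄` on `v`, `a`, `b`, `c` with `v`, `a`, `b` of degree `4`, the fourth neighbours `d`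
of `v` and `x` of `a` differ. -/
theorem pair_ne {α β : ℝ} (hα : α ≤ 3)
    {V : Type} [Fintype V] {G : SimpleGraph V} (hG : MinCounterexample BipartiteClass α β G)
    {v a b c d x y : V} (hv : Nbrs G v a b c d) (ha : Nbrs G a v b c x) (hb : Nbrs G b v a c y)
    (hac : G.Adj a c) (hbc : G.Adj b c) (hab : G.Adj a b) : x ≠ d := by
  rintro rfl
  have hirr : ∀ u w, G.Adj u w → u ≠ w := fun u w h => h.ne
  have hsy : ∀ u w, G.Adj u w → G.Adj w u := fun u w h => h.symm
  have d1 : G.Adj x a → G.Adj x b → False := no_diamond hα hG hv hab hac hbc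
  have d2 : G.Adj x a → G.Adj x c → False :=
    no_diamond hα hG (v := v) (a := a) (b := c) (c := b) (d := x)
      (by unfold Nbrs at *; grind) hac hab hbc.symm
  obtain ⟨nv, hv⟩ := hv
  obtain ⟨na, ha⟩ := ha
  obtain ⟨nb, hb⟩ := hb
  have xa : G.Adj x a := by grind
  have xb : ¬ G.Adj x b := by grind
  have xc : ¬ G.Adj x c := by grind
  have hby : G.Adj b y := by simp [hb]
  have yv : ¬ G.Adj v y := by grind
  by_cases hz : ∃ z, z ≠ v ∧ z ≠ a ∧ z ≠ b ∧ z ≠ c ∧ z ≠ x ∧ z ≠ y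
  · obtain ⟨z, hz⟩ := hz
    refine no_local hG.2.2.1 {a, b} {v, y} {c, x} a z ?_ ?_ ?_ ?_ ?_ ?_ ?_ <;> grind
  -- Here `V = {v, a, b, c, x, y}`, and `x` has too few neighbours.
  · refine no_local hG.2.2.1 {x} {v, y} {a} x b ?_ ?_ ?_ ?_ ?_ ?_ ?_
    case refine_2 =>
      intro u hu w hw
      have : w = v ∨ w = a ∨ w = b ∨ w = c ∨ w = x ∨ w = y := by
        by_contra h
        exact hz ⟨w, by tauto⟩
      grind
    all_goals grind

/-- In a `K₄` on `v`, `a`, `b`, `c` with `v`, `a`, `b` of degree `4`, the outer neighbourhood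
`{v, c, x, y}` of `{a, b}` is not bipartite, since `d` lies outside. As `v` has no neighbour among
`x`, `y`, the vertices `c`, `x`, `y` form a triangle. -/
theorem pair_triangle {α β : ℝ} (hα : α ≤ 3)
    {V : Type} [Fintype V] {G : SimpleGraph V} (hG : MinCounterexample BipartiteClass α β G)
    {v a b c d x y : V} (hv : Nbrs G v a b c d) (ha : Nbrs G a v b c x) (hb : Nbrs G b v a c y)
    (hvc : G.Adj v c) (hac : G.Adj a c) (hbc : G.Adj b c) (hab : G.Adj a b) :
    G.Adj c x ∧ G.Adj c y ∧ G.Adj x y ∧ x ≠ d ∧ y ≠ d := by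
  have hirr : ∀ u w, G.Adj u w → u ≠ w := fun u w h => h.ne
  have hsy : ∀ u w, G.Adj u w → G.Adj w u := fun u w h => h.symm
  have hxd : x ≠ d := pair_ne hα hG hv ha hb hac hbc hab
  have hyd : y ≠ d := pair_ne hα hG (v := v) (a := b) (b := a) (c := c) (x := y) (y := x)
    (by unfold Nbrs at *; grind) hb ha hbc hac hab.symm
  have va : G.Adj v a := by unfold Nbrs at *; grind
  have vb : G.Adj v b := by unfold Nbrs at *; grind
  have d2 : G.Adj x b → G.Adj x c → False :=
    no_diamond hα hG (v := a) (a := b) (b := c) (c := v) (d := x)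
      (by unfold Nbrs at *; grind) hbc vb.symm hvc.symm
  obtain ⟨nv, hv⟩ := hv
  obtain ⟨na, ha⟩ := ha
  obtain ⟨nb, hb⟩ := hb
  have key : ∀ P Q : Set V, (∀ w, w = v ∨ w = c ∨ w = x ∨ w = y → w ∈ P ∨ w ∈ Q) →
      d ∉ P → d ∉ Q → (∀ u ∈ P, ∀ w ∈ P, ¬ G.Adj u w) →
      (∀ u ∈ Q, ∀ w ∈ Q, ¬ G.Adj u w) → False := by
    intro P Q hPQ hzP hzQ hP hQ
    refine no_local hG.2.2.1 {a, b} P Q a d (by simp) ?_ hP hQ ?_ hzP hzQ <;> grind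
  have hvd : v ≠ d := (show G.Adj v d by simp [hv]).ne
  have hax : G.Adj a x := by simp [ha]
  have hby : G.Adj b y := by simp [hb]
  have vx : ¬ G.Adj v x := by grind
  have vy : ¬ G.Adj v y := by grind
  have hcx : G.Adj c x := by
    by_contra hcx
    refine key {c, x} {v, y} ?_ ?_ ?_ ?_ ?_ <;> clear key <;> grind
  have hcy : G.Adj c y := by
    by_contra hcy
    refine key {c, y} {v, x} ?_ ?_ ?_ ?_ ?_ <;> clear key <;> grind
  have hxy : G.Adj x y := by
    by_contra hxy
    refine key {v, x, y} {c} ?_ ?_ ?_ ?_ ?_ <;> clear key <;> grind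
  exact ⟨hcx, hcy, hxy, hxd, hyd⟩

/-- No three vertices of degree `4` form a triangle that lies in a `K₄`. -/
theorem no_case_clique {α β : ℝ} (hα : α ≤ 3)
    {V : Type} [Fintype V] {G : SimpleGraph V} (hG : MinCounterexample BipartiteClass α β G)
    {v a b c d : V} (hv : Nbrs G v a b c d) (h4a : vdeg G a = 4) (h4b : vdeg G b = 4)
    (hab : G.Adj a b) (hac : G.Adj a c) (hbc : G.Adj b c) : False := by
  classical
  have hsy : ∀ u w, G.Adj u w → G.Adj w u := fun u w h => h.symm
  have va : G.Adj v a := by unfold Nbrs at *; grind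
  have vb : G.Adj v b := by unfold Nbrs at *; grind
  have vc : G.Adj v c := by unfold Nbrs at *; grind
  obtain ⟨x, ha⟩ := nbrs_of_three h4a vb.ne vc.ne hbc.ne va.symm hab hac
  obtain ⟨y, hb⟩ := nbrs_of_three h4b va.ne vc.ne hac.ne vb.symm hab.symm hbc
  obtain ⟨cx, cy, xy, xd, yd⟩ := pair_triangle hα hG hv ha hb vc hac hbc hab
  obtain ⟨cd, -, dy, -, -⟩ := pair_triangle hα hG (v := a) (a := v) (b := b) (c := c) (d := x)
    (x := d) (y := y) ha hv (by unfold Nbrs at *; grind) hac vc hbc vb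
  obtain ⟨-, -, dx, -, -⟩ := pair_triangle hα hG (v := b) (a := v) (b := a) (c := c) (d := y)
    (x := d) (y := x) hb (by unfold Nbrs at *; grind) (by unfold Nbrs at *; grind)
    hbc vc hac va
  obtain ⟨nv, hv⟩ := hv
  obtain ⟨na, ha⟩ := ha
  obtain ⟨nb, hb⟩ := hb
  have vd : G.Adj v d := by simp [hv]
  have ax : G.Adj a x := by simp [ha]
  have hby : G.Adj b y := by simp [hb]
  have := va.ne
  have := vb.ne
  have := vc.ne
  have := vd.ne
  have := hab.ne
  have := hac.ne
  have := hbc.ne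
  have := ax.ne
  have := hby.ne
  have := cx.ne
  have := cy.ne
  have := xy.ne
  have xv : x ≠ v := by grind
  have xb : x ≠ b := by grind
  have yv : y ≠ v := by grind
  have ya : y ≠ a := by grind
  have da : d ≠ a := by grind
  have db : d ≠ b := by grind
  obtain ⟨σ, hu0, hu1, hσ⟩ := exists_reduced_state hα hG {v, a, b}
    {s(v, a), s(v, b), s(v, c), s(v, d), s(a, b), s(a, c), s(a, x), s(b, c), s(b, y)} ∅
    {c, d, x, y} (by simp)
    (by
      rw [Finset.card_insert_of_notMem, Finset.card_insert_of_notMem, Finset.card_pair] <;>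
        grind)
    (by simp only [Finset.mem_insert, Finset.mem_singleton]; grind)
    (by
      simp only [Finset.mem_insert, Finset.mem_singleton]
      rintro e (rfl | rfl | rfl | rfl | rfl | rfl | rfl | rfl | rfl) <;> simp [*])
    (by
      have : ({v, a, b} : Finset V).card ≤ 3 := Finset.card_le_three
      iterate 8 rw [Finset.card_insert_of_notMem (a := s(_, _)) (by
        simp only [Finset.mem_insert, Finset.mem_singleton, Sym2.eq_iff]; grind)]
      simp
      omega)
  simp only [Finset.mem_insert, Finset.mem_singleton, not_or] at hσ
  have key : ∀ i j k l : Fin 4, okState i j = true → okState i k = true → okState i l = true →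
      okState j k = true → okState j l = true → okState k l = true →
      ∃ m, okState m m = true ∧ okState m i = true ∧ okState m j = true ∧
        okState m k = true ∧ okState m l = true := by
    decide
  obtain ⟨m, k0, k1, k2, k3, k4⟩ := key (σ c) (σ d) (σ x) (σ y)
    (hσ c d (by grind) (by grind) (by grind) (.inl cd))
    (hσ c x (by grind) (by grind) (by grind) (.inl cx))
    (hσ c y (by grind) (by grind) (by grind) (.inl cy))
    (hσ d x (by grind) (by grind) (by grind) (.inl dx))
    (hσ d y (by grind) (by grind) (by grind) (.inl dy))
    (hσ x y (by grind) (by grind) (by grind) (.inl xy))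
  refine no_extension hG.2.2.1 (S := {v, a, b})
    (fun z => if z = v ∨ z = a ∨ z = b then m else σ z) hu0 hu1 ?_ ?_ ?_
  · intro u w hu hw huw
    simp only [Finset.mem_insert, Finset.mem_singleton, not_or] at hu hw
    exact hσ u w hu hw huw.ne (.inl huw)
  · intro z hz
    simp only [Finset.mem_insert, Finset.mem_singleton] at hz
    exact if_neg hz
  · intro z hz w hw
    have hz' : (z = v ∨ z = a ∨ z = b) := by simpa using hz
    rw [if_pos hz']
    split_ifs with hw'
    · exact k0
    · have : w = c ∨ w = d ∨ w = x ∨ w = y := by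
        rcases hz' with h | h | h <;> rw [h] at hw
        · rw [hv] at hw
          tauto
        · rw [ha] at hw
          tauto
        · rw [hb] at hw
          tauto
      rcases this with rfl | rfl | rfl | rfl <;> assumption

/-! ### One neighbour of degree four outside the triangle -/

/-- The configuration in which `d` and `x`, the fourth neighbours of `v` and `a`, form a triangle
with `b`. -/
theorem no_case_pendant_aux {α β : ℝ} (hα : α ≤ 3)
    {V : Type} [Fintype V] {G : SimpleGraph V} (hG : MinCounterexample BipartiteClass α β G)
    {v a b c d x : V} (hv : Nbrs G v a b c d) (ha : Nbrs G a v b c x) (h4d : vdeg G d = 4)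
    (hab : G.Adj a b) (hac : G.Adj a c) (hbc : G.Adj b c)
    (hbd : G.Adj b d) (hbx : G.Adj b x) (hdx : G.Adj d x)
    (hcd : ¬ G.Adj c d) (had : ¬ G.Adj a d) : False := by
  classical
  have hirr : ∀ u w, G.Adj u w → u ≠ w := fun u w h => h.ne
  have hsy : ∀ u w, G.Adj u w → G.Adj w u := fun u w h => h.symm
  obtain ⟨nv, hv⟩ := hv
  obtain ⟨na, ha⟩ := ha
  have va : G.Adj v a := by simp [hv]
  have vb : G.Adj v b := by simp [hv]
  have vc : G.Adj v c := by simp [hv]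
  have vd : G.Adj v d := by simp [hv]
  have ax : G.Adj a x := by simp [ha]
  have xd : x ≠ d := hdx.ne.symm
  have vx : ¬ G.Adj v x := by grind
  have hxv : x ≠ v := by grind
  obtain ⟨s, nd, hd⟩ := nbrs_of_three h4d vb.ne hxv.symm hbx.ne vd.symm hbd.symm hdx
  have ds : G.Adj d s := by simp [hd]
  have vs : ¬ G.Adj v s := by grind
  have bs : G.Adj b s := by
    by_contra hbs
    refine no_local hG.2.2.1 {d} {b, s} {v, x} d a ?_ ?_ ?_ ?_ ?_ ?_ ?_ <;> grind
  have xs : G.Adj x s := by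
    by_contra hxs
    refine no_local hG.2.2.1 {d} {v, x, s} {b} d a ?_ ?_ ?_ ?_ ?_ ?_ ?_ <;> grind
  have := va.ne
  have := vb.ne
  have := vc.ne
  have := vd.ne
  have := hab.ne
  have := hac.ne
  have := hbc.ne
  have := ax.ne
  have := ds.ne
  have sc : s ≠ c := by grind
  have sa : s ≠ a := by grind
  have sv : s ≠ v := by grind
  -- Adding `cx` makes `{b, c, x}` and `{b, x, s}` triangles, so a cut can only separate `c` from `s`.
  obtain ⟨σ, hu0, hu1, hσ⟩ := exists_reduced_state hα hG {v, a, d}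
    {s(v, a), s(v, b), s(v, c), s(v, d), s(a, b), s(a, c), s(a, x), s(d, b), s(d, x), s(d, s)}
    {s(c, x)}
    {b, c, x, s} (by simp)
    (by
      rw [Finset.card_insert_of_notMem, Finset.card_insert_of_notMem, Finset.card_pair] <;>
        grind)
    (by simp only [Finset.mem_insert, Finset.mem_singleton]; grind)
    (by
      have := hbd.symm
      simp only [Finset.mem_insert, Finset.mem_singleton]
      rintro e (rfl | rfl | rfl | rfl | rfl | rfl | rfl | rfl | rfl | rfl) <;> simp [*])
    (by
      have : ({v, a, d} : Finset V).card ≤ 3 := Finset.card_le_three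
      iterate 9 rw [Finset.card_insert_of_notMem (a := s(_, _)) (by
        simp only [Finset.mem_insert, Finset.mem_singleton, Sym2.eq_iff]; grind)]
      simp
      omega)
  simp only [Finset.mem_insert, Finset.mem_singleton, not_or] at hσ
  have key : ∀ i j k l : Fin 4, okState i j = true → okState i k = true → okState j k = true →
      okState i l = true → okState k l = true →
      ∃ p q r, okState p q = true ∧ okState p i = true ∧ okState p j = true ∧
        okState p r = true ∧ okState q i = true ∧ okState q j = true ∧ okState q k = true ∧
        okState r i = true ∧ okState r k = true ∧ okState r l = true := by
    decide
  obtain ⟨p, q, r, k1, k2, k3, k4, k5, k6, k7, k8, k9, k10⟩ := key (σ b) (σ c) (σ x) (σ s)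
    (hσ b c (by grind) (by grind) (by grind) (.inl hbc))
    (hσ b x (by grind) (by grind) (by grind) (.inl hbx))
    (hσ c x (by grind) (by grind) (by grind) (.inr rfl))
    (hσ b s (by grind) (by grind) (by grind) (.inl bs))
    (hσ x s (by grind) (by grind) (by grind) (.inl xs))
  have hsymm : ∀ i j, okState i j = okState j i := by decide
  set τ : V → Fin 4 := fun z => if z = v then p else if z = a then q else if z = d then r
    else σ z with hτ
  have tv : τ v = p := by simp [hτ]
  have ta : τ a = q := by simp only [hτ]; grind
  have td : τ d = r := by simp only [hτ]; grind
  have tb : τ b = σ b := by simp only [hτ]; grind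
  have tc : τ c = σ c := by simp only [hτ]; grind
  have tx : τ x = σ x := by simp only [hτ]; grind
  have ts : τ s = σ s := by simp only [hτ]; grind
  refine no_extension hG.2.2.1 (S := {v, a, d}) τ hu0 hu1 ?_ ?_ ?_
  · intro u w hu hw huw
    simp only [Finset.mem_insert, Finset.mem_singleton, not_or] at hu hw
    exact hσ u w hu hw huw.ne (.inl huw)
  · intro z hz
    simp only [Finset.mem_insert, Finset.mem_singleton, not_or] at hz
    simp [hτ, hz]
  · clear_value τ
    rw [← tb] at k2 k5 k8
    rw [← tc] at k3 k6
    rw [← tx] at k7 k9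
    rw [← ts] at k10
    subst tv ta td
    intro z hz w hw
    simp only [Finset.mem_insert, Finset.mem_singleton] at hz
    rcases hz with rfl | rfl | rfl
    · rw [hv] at hw
      rcases hw with rfl | rfl | rfl | rfl <;> assumption
    · rw [ha] at hw
      rcases hw with rfl | rfl | rfl | rfl <;> first | assumption | (rw [hsymm]; assumption)
    · rw [hd] at hw
      rcases hw with rfl | rfl | rfl | rfl <;> first | assumption | (rw [hsymm]; assumption)

set_option maxHeartbeats 1000000 in
/-- A vertex `v` of degree `4` whose neighbourhood has a triangle `a`, `b`, `c` cannot have both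
`a` and the remaining neighbour `d` of degree `4`. -/
theorem no_case_pendant {α β : ℝ} (hα : α ≤ 3)
    {V : Type} [Fintype V] {G : SimpleGraph V} (hG : MinCounterexample BipartiteClass α β G)
    {v a b c d : V} (hv : Nbrs G v a b c d) (h4a : vdeg G a = 4) (h4d : vdeg G d = 4)
    (hab : G.Adj a b) (hac : G.Adj a c) (hbc : G.Adj b c) : False := by
  have hirr : ∀ u w, G.Adj u w → u ≠ w := fun u w h => h.ne
  have hsy : ∀ u w, G.Adj u w → G.Adj w u := fun u w h => h.symm
  have va : G.Adj v a := by unfold Nbrs at *; grind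
  have vb : G.Adj v b := by unfold Nbrs at *; grind
  have vc : G.Adj v c := by unfold Nbrs at *; grind
  have vd : G.Adj v d := by unfold Nbrs at *; grind
  obtain ⟨x, ha⟩ := nbrs_of_three h4a vb.ne vc.ne hbc.ne va.symm hab hac
  have d1 : G.Adj d a → G.Adj d b → False := no_diamond hα hG hv hab hac hbc
  have d2 : G.Adj d a → G.Adj d c → False :=
    no_diamond hα hG (v := v) (a := a) (b := c) (c := b) (d := d)
      (by unfold Nbrs at *; grind) hac hab hbc.symm
  have d3 : G.Adj d b → G.Adj d c → False :=
    no_diamond hα hG (v := v) (a := b) (b := c) (c := a) (d := d)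
      (by unfold Nbrs at *; grind) hbc hab.symm hac.symm
  have e3 : G.Adj x b → G.Adj x c → False :=
    no_diamond hα hG (v := a) (a := b) (b := c) (c := v) (d := x)
      (by unfold Nbrs at *; grind) hbc vb.symm vc.symm
  have hv0 := hv
  have ha0 := ha
  obtain ⟨nv, hv⟩ := hv
  obtain ⟨na, ha⟩ := ha
  have had : ¬ G.Adj a d := by
    intro had
    obtain ⟨t, t', nd, hd⟩ := nbrs_of_two h4d va.ne vd.symm had.symm
    have dt : G.Adj d t := by simp [hd]
    have dt' : G.Adj d t' := by simp [hd]
    have vt : ¬ G.Adj v t := by grind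
    have at' : ¬ G.Adj a t' := by grind
    refine no_local hG.2.2.1 {d} {v, t} {a, t'} d b ?_ ?_ ?_ ?_ ?_ ?_ ?_ <;> grind
  have ax : G.Adj a x := by simp [ha]
  have xd : x ≠ d := by grind
  have vx : ¬ G.Adj v x := by grind
  obtain ⟨z, hz⟩ : ∃ z, z ≠ v ∧ z ≠ a ∧ z ≠ b ∧ z ≠ c ∧ z ≠ d ∧ z ≠ x := by
    obtain ⟨t1, t2, t3, nd, hd⟩ := nbrs_of_one h4d vd.symm
    by_contra hz
    have hz' : ∀ z, z = v ∨ z = a ∨ z = b ∨ z = c ∨ z = d ∨ z = x := fun z => by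
      by_contra h
      exact hz ⟨z, by tauto⟩
    have := hz' t1
    have := hz' t2
    have := hz' t3
    have : G.Adj d t1 := by simp [hd]
    have : G.Adj d t2 := by simp [hd]
    have : G.Adj d t3 := by simp [hd]
    clear hz hz'
    grind
  have key : ∀ P Q : Set V, (∀ w, w = b ∨ w = c ∨ w = d ∨ w = x → w ∈ P ∨ w ∈ Q) →
      z ∉ P → z ∉ Q → (∀ u ∈ P, ∀ w ∈ P, ¬ G.Adj u w) →
      (∀ u ∈ Q, ∀ w ∈ Q, ¬ G.Adj u w) → False := by
    intro P Q hPQ hzP hzQ hP hQ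
    refine no_local hG.2.2.1 {v, a} P Q v z (by simp) ?_ hP hQ ?_ hzP hzQ <;> grind
  have k1 : ¬ (¬ G.Adj d b ∧ ¬ G.Adj x c) := fun h => key {b, d} {c, x}
    (by grind) (by grind) (by grind) (by grind) (by grind)
  have k2 : ¬ (¬ G.Adj d c ∧ ¬ G.Adj x b) := fun h => key {c, d} {b, x}
    (by grind) (by grind) (by grind) (by grind) (by grind)
  have k3 : ¬ (¬ G.Adj d b ∧ ¬ G.Adj x b ∧ ¬ G.Adj d x) := fun h => key {b, d, x} {c}
    (by grind) (by grind) (by grind) (by grind) (by grind)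
  have k4 : ¬ (¬ G.Adj d c ∧ ¬ G.Adj x c ∧ ¬ G.Adj d x) := fun h => key {c, d, x} {b}
    (by grind) (by grind) (by grind) (by grind) (by grind)
  by_cases hdb : G.Adj d b
  · exact no_case_pendant_aux hα hG hv0 ha0 h4d hab hac hbc hdb.symm
      (by grind) (by grind) (by grind) had
  · refine no_case_pendant_aux hα hG (v := v) (a := a) (b := c) (c := b) (d := d) (x := x)
      (by unfold Nbrs at *; grind) (by unfold Nbrs at *; grind) h4d hac hab hbc.symm
      (by grind) (by grind) (by grind) (by grind) had

/-! ### Conclusion -/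

/-- Three vertices of degree `4` on five vertices account for nine edges, more than a graph of
positive quality can have. -/
theorem exists_outside {α β : ℝ} (hα : α ≤ 3) (hβ : 4 * α - β = 6)
    {V : Type} [Fintype V] {G : SimpleGraph V} (hq : 0 < quality α β G)
    {v u w p q : V} (hv : Nbrs G v u w p q) (h4u : vdeg G u = 4) (h4w : vdeg G w = 4) :
    ∃ z, z ≠ v ∧ z ≠ u ∧ z ≠ w ∧ z ≠ p ∧ z ≠ q := by
  classical
  by_contra hz
  have hirr : ∀ u w, G.Adj u w → u ≠ w := fun u w h => h.ne
  have hsy : ∀ u w, G.Adj u w → G.Adj w u := fun u w h => h.symm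
  obtain ⟨nv, hv⟩ := hv
  have vu : G.Adj v u := by simp [hv]
  have vw : G.Adj v w := by simp [hv]
  have vp : G.Adj v p := by simp [hv]
  have vq : G.Adj v q := by simp [hv]
  obtain ⟨t1, t2, t3, nu, hu⟩ := nbrs_of_one h4u vu.symm
  obtain ⟨r1, r2, r3, nw, hw⟩ := nbrs_of_one h4w vw.symm
  have hz' : ∀ z, z = v ∨ z = u ∨ z = w ∨ z = p ∨ z = q := fun z => by
    by_contra h
    exact hz ⟨z, by tauto⟩
  have := hz' t1
  have := hz' t2
  have := hz' t3
  have := hz' r1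
  have := hz' r2
  have := hz' r3
  have : G.Adj u t1 := by simp [hu]
  have : G.Adj u t2 := by simp [hu]
  have : G.Adj u t3 := by simp [hu]
  have : G.Adj w r1 := by simp [hw]
  have : G.Adj w r2 := by simp [hw]
  have : G.Adj w r3 := by simp [hw]
  have uw : G.Adj u w := by grind
  have up : G.Adj u p := by grind
  have uq : G.Adj u q := by grind
  have wp : G.Adj w p := by grind
  have wq : G.Adj w q := by grind
  have := vu.ne
  have := vw.ne
  have := vp.ne
  have := vq.ne
  have hV : Nat.card V ≤ 5 := by
    rw [Nat.card_eq_fintype_card, ← Finset.card_univ]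
    refine (Finset.card_le_card (t := {v, u, w, p, q}) ?_).trans Finset.card_le_five
    intro z _
    simp only [Finset.mem_insert, Finset.mem_singleton]
    exact hz' z
  have hV1 : 5 ≤ Nat.card V := by
    rw [Nat.card_eq_fintype_card, ← Finset.card_univ]
    refine le_trans (le_of_eq ?_) (Finset.card_le_card (s := {v, u, w, p, q})
      (Finset.subset_univ _))
    iterate 4 rw [Finset.card_insert_of_notMem (by
        simp only [Finset.mem_insert, Finset.mem_singleton]; grind)]
    simp
  have hE : 9 ≤ Nat.card G.edgeSet := by
    rw [Nat.card_eq_fintype_card, ← SimpleGraph.edgeFinset_card]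
    refine le_trans (le_of_eq ?_) (Finset.card_le_card (s := {s(v, u), s(v, w), s(v, p),
      s(v, q), s(u, w), s(u, p), s(u, q), s(w, p), s(w, q)}) ?_)
    · iterate 8 rw [Finset.card_insert_of_notMem (by
        simp only [Finset.mem_insert, Finset.mem_singleton, Sym2.eq_iff]; grind)]
      simp
    · intro e he
      simp only [Finset.mem_insert, Finset.mem_singleton] at he
      rw [SimpleGraph.mem_edgeFinset]
      rcases he with rfl | rfl | rfl | rfl | rfl | rfl | rfl | rfl | rfl <;> assumption
  have hV' : (Nat.card V : ℝ) = 5 := by exact_mod_cast le_antisymm hV hV1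
  have hE' : (9 : ℝ) ≤ Nat.card G.edgeSet := by exact_mod_cast hE
  unfold quality at hq
  rw [hV'] at hq
  linarith

/-- in a minimal counterexample for bipartite cuts, the set `U` of
degree-4 vertices induces a graph of maximum degree at most 1. -/
theorem stmt18 (α β : ℝ) (hα1 : 2 < α) (hα2 : α ≤ 3) (hβ : 4 * α - β = 6)
    {V : Type} [Fintype V] (G : SimpleGraph V)
    (hG : MinCounterexample BipartiteClass α β G) :
    ∀ v : ↥{v : V | vdeg G v = 4},
      vdeg (G.induce {v : V | vdeg G v = 4}) v ≤ 1 := by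
  rintro ⟨v, h4v⟩
  by_contra hlt
  rw [not_le] at hlt
  obtain ⟨⟨u, h4u⟩, ⟨w, h4w⟩, vu, vw, hne⟩ := (Set.one_lt_ncard_iff (Set.toFinite _)).1 hlt
  replace hne : u ≠ w := fun h => hne (Subtype.ext h)
  replace vu : G.Adj v u := vu
  replace vw : G.Adj v w := vw
  replace h4v : vdeg G v = 4 := h4v
  replace h4u : vdeg G u = 4 := h4u
  replace h4w : vdeg G w = 4 := h4w
  obtain ⟨p, q, hv⟩ := nbrs_of_two h4v hne vu vw
  obtain ⟨z, hz⟩ := exists_outside hα2 hβ hG.2.1 hv h4u h4w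
  rcases exists_triangle hG.2.2.1 hv hz with ⟨h1, h2, h3⟩ | ⟨h1, h2, h3⟩ | ⟨h1, h2, h3⟩ |
    ⟨h1, h2, h3⟩
  · exact no_case_clique hα2 hG hv h4u h4w h1 h2 h3
  · exact no_case_clique hα2 hG (v := v) (a := u) (b := w) (c := q) (d := p)
      (by unfold Nbrs at *; grind) h4u h4w h1 h2 h3
  · exact no_case_pendant hα2 hG (v := v) (a := u) (b := p) (c := q) (d := w)
      (by unfold Nbrs at *; grind) h4u h4w h1 h2 h3
  · exact no_case_pendant hα2 hG (v := v) (a := w) (b := p) (c := q) (d := u)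
      (by unfold Nbrs at *; grind) h4w h4u h1 h2 h3
end
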